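/- arXiv:1211.4514 — 11 statements merged into one kernel-verified Lean document; each statement's English description precedes it below -/
import Mathlib

section
/- The convex hull in ℝ³ of the union of the two orthogonal unit disks D₁ = {(x,y,0) : x² + y² ≤ 1} and D₂ = {(x,0,z) : x² + z² ≤ 1} equals the set {(x,y,z) : x² ≤ 1 and |y| + |z| ≤ √(1 − x²)}. -/
open Real

/-!
At height `x`, the two disks contribute perpendicular segments of common half-length `√(1 - x²)`
crossing at their midpoints. The hull of two such segments is the `ℓ¹` ball
`|y| + |z| ≤ √(1 - x²)`, so every point of the right-hand side lies in the hull. Conversely, that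
bound reads `x² + (|y| + |z|)² ≤ 1`, which cuts out a sublevel set of a convex function, and this
set contains both disks. The argument works with norms in place of absolute values.
-/

lemma le_and_le_sqrt_sub_iff {a c s : ℝ} (hs : 0 ≤ s) :
    a ≤ c ∧ s ≤ √(c - a) ↔ a + s ^ 2 ≤ c := by
  constructor
  · rintro ⟨hac, hsqrt⟩
    linarith [(le_sqrt hs (sub_nonneg.2 hac)).1 hsqrt]
  · intro h
    exact ⟨by linarith [sq_nonneg s], le_sqrt_of_sq_le (by linarith)⟩

lemma convex_setOf_sq_add_sq_le {V : Type*} [AddCommGroup V] [Module ℝ V] {s : Set V}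
    {f g : V → ℝ} (hf : ConvexOn ℝ s f) (hf₀ : ∀ ⦃x⦄, x ∈ s → 0 ≤ f x)
    (hg : ConvexOn ℝ s g) (hg₀ : ∀ ⦃x⦄, x ∈ s → 0 ≤ g x) (c : ℝ) :
    Convex ℝ {x ∈ s | f x ^ 2 + g x ^ 2 ≤ c} :=
  ((hf.pow hf₀ 2).add (hg.pow hg₀ 2)).convex_le c

lemma convex_setOf_norm_sq_add_norm_add_norm_sq_le {ι : Type*} {E : ι → Type*}
    [∀ i, SeminormedAddCommGroup (E i)] [∀ i, NormedSpace ℝ (E i)] {p : ENNReal} (i j k : ι)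
    (c : ℝ) : Convex ℝ {x : PiLp p E | ‖x i‖ ^ 2 + (‖x j‖ + ‖x k‖) ^ 2 ≤ c} := by
  have convexOn_norm_apply (l : ι) : ConvexOn ℝ Set.univ fun x : PiLp p E ↦ ‖x l‖ :=
    convexOn_univ_norm.comp_linearMap (PiLp.projₗ p E l)
  simpa using! convex_setOf_sq_add_sq_le (convexOn_norm_apply i) (fun _ _ ↦ norm_nonneg _)
    ((convexOn_norm_apply j).add (convexOn_norm_apply k))
    (fun _ _ ↦ add_nonneg (norm_nonneg _) (norm_nonneg _)) c

lemma exists_norm_le_and_smul_eq_of_norm_le_abs_mul {F : Type*} [NormedAddCommGroup F]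
    [NormedSpace ℝ F] {a s : ℝ} (hs : 0 ≤ s) {y : F} (hy : ‖y‖ ≤ |a| * s) :
    ∃ y', ‖y'‖ ≤ s ∧ a • y' = y := by
  open scoped Pointwise in
  have : y ∈ a • Metric.closedBall (0 : F) s := by
    rwa [smul_closedBall _ _ hs, smul_zero, mem_closedBall_zero_iff, norm_eq_abs]
  simpa [Set.mem_smul_set] using this

lemma exists_mem_segment_prod_of_norm_add_norm_le {F G : Type*} [NormedAddCommGroup F]
    [NormedSpace ℝ F] [NormedAddCommGroup G] [NormedSpace ℝ G] {y : F} {z : G} {s : ℝ}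
    (h : ‖y‖ + ‖z‖ ≤ s) :
    ∃ y' z', ‖y'‖ ≤ s ∧ ‖z'‖ ≤ s ∧ (y, z) ∈ segment ℝ (y', (0 : G)) (0, z') := by
  have hs : 0 ≤ s := by linarith [norm_nonneg y, norm_nonneg z]
  have hy_le : ‖y‖ ≤ s := by linarith [norm_nonneg z]
  have hy : ‖y‖ / s * s = ‖y‖ :=
    div_mul_cancel_of_imp fun hs₀ ↦ le_antisymm (hs₀ ▸ hy_le) (norm_nonneg y)
  have hz : ‖z‖ ≤ (1 - ‖y‖ / s) * s := by linarith
  have ha : 0 ≤ ‖y‖ / s := by positivity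
  have hb : 0 ≤ 1 - ‖y‖ / s := sub_nonneg.2 (div_le_one_of_le₀ hy_le hs)
  obtain ⟨y', hy', hay'⟩ := exists_norm_le_and_smul_eq_of_norm_le_abs_mul hs <| by
    rw [abs_of_nonneg ha, hy]
  obtain ⟨z', hz', hbz'⟩ := exists_norm_le_and_smul_eq_of_norm_le_abs_mul hs <| by
    rwa [abs_of_nonneg hb]
  exact ⟨y', z', hy', hz', _, _, ha, hb, add_sub_cancel _ _, by simp [hay', hbz']⟩

lemma mem_segment_toLp_update_update {ι : Type*} [DecidableEq ι] {E : ι → Type*}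
    [∀ i, AddCommGroup (E i)] [∀ i, Module ℝ (E i)] {p : ENNReal} {j k : ι} (hjk : j ≠ k)
    {x : PiLp p E} {y : E j} {z : E k} (h : (x j, x k) ∈ segment ℝ (y, (0 : E k)) (0, z)) :
    x ∈ segment ℝ (.toLp p (Function.update (Function.update x j y) k 0))
      (.toLp p (Function.update (Function.update x j 0) k z)) := by
  obtain ⟨a, b, ha, hb, hab, heq⟩ := h
  obtain ⟨hay, hbz⟩ : a • y = x j ∧ b • z = x k := by simpa using heq
  refine ⟨a, b, ha, hb, hab, ?_⟩
  ext i
  simp only [WithLp.ofLp_add, WithLp.ofLp_smul, Pi.add_apply, Pi.smul_apply]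
  obtain rfl | hik := eq_or_ne i k
  · simp [hbz]
  obtain rfl | hij := eq_or_ne i j
  · simp [hjk, hay]
  · simp [hik, hij, ← add_smul, hab]

theorem convexHull_two_orthogonal_disks_common_center_general {E : Fin 3 → Type*}
    [∀ i, NormedAddCommGroup (E i)] [∀ i, NormedSpace ℝ (E i)] (r : ℝ) :
    convexHull ℝ
      ({p : PiLp 2 E | ‖p 0‖ ^ 2 + ‖p 1‖ ^ 2 ≤ r ^ 2 ∧ p 2 = 0} ∪
       {p : PiLp 2 E | ‖p 0‖ ^ 2 + ‖p 2‖ ^ 2 ≤ r ^ 2 ∧ p 1 = 0}) =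
    {p : PiLp 2 E | ‖p 0‖ ^ 2 ≤ r ^ 2 ∧ ‖p 1‖ + ‖p 2‖ ≤ √(r ^ 2 - ‖p 0‖ ^ 2)} := by
  apply Set.Subset.antisymm
  · simp_rw [le_and_le_sqrt_sub_iff (add_nonneg (norm_nonneg _) (norm_nonneg _))]
    refine convexHull_min ?_ (convex_setOf_norm_sq_add_norm_add_norm_sq_le 0 1 2 _)
    rintro p (⟨hp, h₀⟩ | ⟨hp, h₀⟩) <;> simpa [h₀] using hp
  · rintro p ⟨hx, hyz⟩
    obtain ⟨y, z, hy, hz, hseg⟩ := exists_mem_segment_prod_of_norm_add_norm_le hyz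
    refine segment_subset_convexHull (.inl ?_) (.inr ?_)
      (mem_segment_toLp_update_update (by decide) hseg)
    · simpa using (le_and_le_sqrt_sub_iff (norm_nonneg y)).1 ⟨hx, hy⟩
    · simpa using (le_and_le_sqrt_sub_iff (norm_nonneg z)).1 ⟨hx, hz⟩

/-- The convex hull in ℝ³ of the union of the two orthogonal unit disks
D₁ = {(x,y,0) : x² + y² ≤ 1} and D₂ = {(x,0,z) : x² + z² ≤ 1} equals the set
{(x,y,z) : x² ≤ 1 and |y| + |z| ≤ √(1 − x²)}. -/
theorem convexHull_two_orthogonal_disks_common_center :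
    convexHull ℝ
      ({p : EuclideanSpace ℝ (Fin 3) | (p 0) ^ 2 + (p 1) ^ 2 ≤ 1 ∧ p 2 = 0} ∪
       {p : EuclideanSpace ℝ (Fin 3) | (p 0) ^ 2 + (p 2) ^ 2 ≤ 1 ∧ p 1 = 0}) =
    {p : EuclideanSpace ℝ (Fin 3) |
      (p 0) ^ 2 ≤ 1 ∧ |p 1| + |p 2| ≤ Real.sqrt (1 - (p 0) ^ 2)} := by
  simpa [norm_eq_abs] using
    convexHull_two_orthogonal_disks_common_center_general (E := fun _ ↦ ℝ) 1
end

section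
/- The Lebesgue volume of the convex hull in ℝ³ of the union of the two orthogonal unit disks D₁ = {(x,y,0) : x² + y² ≤ 1} and D₂ = {(x,0,z) : x² + z² ≤ 1} equals 8/3. -/
open Real MeasureTheory

/-! The hull consists of the points with `x² + (|y| + |z|)² ≤ 1`: this region is convex, and a point
of it is the mean of `(x, ±s, 0)` and `(x, 0, ±s)`, `s = |y| + |z|`, with weights `|y| / s` and
`|z| / s`. Its slice at `x` is an `ℓ¹`-ball of radius `√(1 - x²)`, of area `2 (1 - x²)`, and
`∫ x in -1..1, 2 (1 - x²) = 8 / 3`. -/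

/-- The union of the copies of a region `B ⊆ E × ℝ` placed in the slices `E × ℝ eᵢ` of `E × ℝ^ι`,
sharing the factor `E`. Two perpendicular disks with a common diameter are the copies of the planar
unit disk for `E = ℝ` and `ι = Fin 2`. -/
def axisCopies (ι : Type*) [DecidableEq ι] {E : Type*} (B : Set (E × ℝ)) : Set (E × (ι → ℝ)) :=
  ⋃ i, Prod.map id (Pi.single i) '' B

lemma mem_axisCopies {ι E : Type*} [DecidableEq ι] {B : Set (E × ℝ)} {p : E × (ι → ℝ)} :
    p ∈ axisCopies ι B ↔ ∃ i, (p.1, p.2 i) ∈ B ∧ ∀ j ≠ i, p.2 j = 0 := by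
  refine Set.mem_iUnion.trans (exists_congr fun i ↦ ⟨?_, fun ⟨hB, h0⟩ ↦ ⟨_, hB, ?_⟩⟩)
  · rintro ⟨q, hq, rfl⟩
    simp +contextual [hq]
  · ext j
    · rfl
    · by_cases hj : j = i
      · simp [hj]
      · simp [hj, h0 j hj]

lemma mk_single_mem_axisCopies {ι E : Type*} [DecidableEq ι] {B : Set (E × ℝ)} {x : E} {t : ℝ}
    (h : (x, t) ∈ B) (i : ι) : (x, Pi.single i t) ∈ axisCopies ι B :=
  Set.mem_iUnion_of_mem i ⟨(x, t), h, rfl⟩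

section ConvexHull

variable {E : Type*} [AddCommGroup E] [Module ℝ E] {B : Set (E × ℝ)}

lemma mem_of_abs_le_of_convex (hB : Convex ℝ B) (hsymm : ∀ x t, (x, t) ∈ B → (x, -t) ∈ B)
    {x : E} {s t : ℝ} (ht : (x, t) ∈ B) (hst : |s| ≤ |t|) : (x, s) ∈ B := by
  have hfiber : Convex ℝ {u : ℝ | (x, u) ∈ B} := fun u hu v hv a b ha hb hab ↦ by
    simpa [Convex.combo_self hab] using hB hu hv ha hb hab
  have habs : (x, |t|) ∈ B := by
    rcases abs_choice t with h | h <;> rw [h]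
    exacts [ht, hsymm x t ht]
  exact hfiber.ordConnected.out (hsymm x _ habs) habs (abs_le.mp hst)

variable {ι : Type*} [Fintype ι]

lemma convex_setOf_sum_abs_mem (hB : Convex ℝ B) (hsymm : ∀ x t, (x, t) ∈ B → (x, -t) ∈ B) :
    Convex ℝ {p : E × (ι → ℝ) | (p.1, ∑ i, |p.2 i|) ∈ B} := by
  intro p hp q hq a b ha hb hab
  have hcomb : (a • p.1 + b • q.1, a * ∑ i, |p.2 i| + b * ∑ i, |q.2 i|) ∈ B := hB hp hq ha hb hab
  refine mem_of_abs_le_of_convex hB hsymm hcomb (abs_le_abs_of_nonneg (by positivity) ?_)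
  rw [Finset.mul_sum, Finset.mul_sum, ← Finset.sum_add_distrib]
  gcongr with i
  calc |a * p.2 i + b * q.2 i| ≤ |a * p.2 i| + |b * q.2 i| := abs_add_le _ _
    _ = a * |p.2 i| + b * |q.2 i| := by rw [abs_mul, abs_mul, abs_of_nonneg ha, abs_of_nonneg hb]

variable [DecidableEq ι]

lemma setOf_sum_abs_mem_subset_convexHull_axisCopies [Nonempty ι] (hB : Convex ℝ B)
    (hsymm : ∀ x t, (x, t) ∈ B → (x, -t) ∈ B) :
    {p : E × (ι → ℝ) | (p.1, ∑ i, |p.2 i|) ∈ B} ⊆ convexHull ℝ (axisCopies ι B) := by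
  rintro ⟨x, y⟩ (hxy : (x, ∑ i, |y i|) ∈ B)
  set s := ∑ i, |y i|
  rcases (show 0 ≤ s by positivity).eq_or_lt with hs0 | hs0
  · have hy : y = 0 := by
      ext i
      simpa using (Finset.sum_eq_zero_iff_of_nonneg fun i _ ↦ abs_nonneg (y i)).mp hs0.symm i
    obtain ⟨i⟩ := ‹Nonempty ι›
    have hmem := subset_convexHull ℝ _ (mk_single_mem_axisCopies hxy i)
    rwa [← hs0, Pi.single_zero, ← hy] at hmem
  · have hvertex (i : ι) : (x, Pi.single i (SignType.sign (y i) * s)) ∈ axisCopies ι B := by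
      refine mk_single_mem_axisCopies (mem_of_abs_le_of_convex hB hsymm hxy ?_) i
      rcases lt_trichotomy (y i) 0 with h | h | h <;> simp [h]
    have hweights : ∑ i, |y i| / s = 1 := by rw [← Finset.sum_div, div_self hs0.ne']
    have hcoord (j : ι) : |y j| / s * (SignType.sign (y j) * s) = y j := by
      rw [mul_comm, mul_assoc, mul_div_cancel₀ _ hs0.ne', sign_mul_abs]
    have hcomb : ∑ i, (|y i| / s) • (x, Pi.single i (SignType.sign (y i) * s)) = (x, y) := by
      ext j
      · simp [Prod.fst_sum, ← Finset.sum_smul, hweights]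
      · simp [Prod.snd_sum, Pi.single_apply, hcoord]
    rw [← hcomb]
    exact (convex_convexHull ℝ _).sum_mem (fun i _ ↦ by positivity) hweights
      fun i _ ↦ subset_convexHull ℝ _ (hvertex i)

theorem convexHull_axisCopies [Nonempty ι] (hB : Convex ℝ B)
    (hsymm : ∀ x t, (x, t) ∈ B → (x, -t) ∈ B) :
    convexHull ℝ (axisCopies ι B) = {p | (p.1, ∑ i, |p.2 i|) ∈ B} := by
  refine (convexHull_min ?_ (convex_setOf_sum_abs_mem hB hsymm)).antisymm
    (setOf_sum_abs_mem_subset_convexHull_axisCopies hB hsymm)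
  refine Set.iUnion_subset fun i ↦ Set.image_subset_iff.mpr fun q hq ↦ ?_
  have hsum : ∑ j, |(Pi.single i q.2 : ι → ℝ) j| = |q.2| := by
    simp [Pi.single_apply, apply_ite abs]
  exact mem_of_abs_le_of_convex hB hsymm hq (by simp [hsum])

end ConvexHull

section Volume

variable {ι : Type*} [Fintype ι]

lemma volume_setOf_sum_abs_le [Nonempty ι] (r : ℝ) :
    volume {y : ι → ℝ | ∑ i, |y i| ≤ r} =
      ENNReal.ofReal (2 * r) ^ Fintype.card ι / (Fintype.card ι).factorial := by
  have h := volume_sum_rpow_le ι le_rfl r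
  simp only [rpow_one, div_one] at h
  rw [h, one_add_one_eq_two, Gamma_two, mul_one, Gamma_nat_eq_factorial,
    ENNReal.ofReal_div_of_pos (by positivity), ENNReal.ofReal_pow zero_le_two,
    ENNReal.ofReal_natCast, ENNReal.ofReal_mul zero_le_two, mul_pow, ← mul_div_assoc, mul_comm]

variable {α : Type*} [MeasurableSpace α]

lemma prod_volume_setOf_sum_abs_le [Nonempty ι] (μ : Measure α) {s : Set α} (hs : MeasurableSet s)
    {r : α → ℝ} (hr : Measurable r) :
    μ.prod volume {p : α × (ι → ℝ) | p.1 ∈ s ∧ ∑ i, |p.2 i| ≤ r p.1} =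
      ∫⁻ x in s, ENNReal.ofReal (2 * r x) ^ Fintype.card ι / (Fintype.card ι).factorial ∂μ := by
  have hsum : Measurable fun y : ι → ℝ ↦ ∑ i, |y i| := Continuous.measurable (by fun_prop)
  have hmeas : MeasurableSet {p : α × (ι → ℝ) | p.1 ∈ s ∧ ∑ i, |p.2 i| ≤ r p.1} :=
    (measurable_fst hs).inter (measurableSet_le (hsum.comp measurable_snd) (hr.comp measurable_fst))
  rw [Measure.prod_apply hmeas, ← lintegral_indicator hs]
  congr with x
  by_cases hx : x ∈ s <;> simp [hx, volume_setOf_sum_abs_le]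

lemma volume_setOf_mem_Icc_sum_abs_le [Nonempty ι] {a b : ℝ} (hab : a ≤ b) {r : ℝ → ℝ}
    (hr : Continuous r) (hr0 : ∀ x ∈ Set.Icc a b, 0 ≤ r x) :
    volume {p : ℝ × (ι → ℝ) | p.1 ∈ Set.Icc a b ∧ ∑ i, |p.2 i| ≤ r p.1} =
      ENNReal.ofReal (∫ x in a..b, (2 * r x) ^ Fintype.card ι / (Fintype.card ι).factorial) := by
  rw [Measure.volume_eq_prod, prod_volume_setOf_sum_abs_le _ measurableSet_Icc hr.measurable,
    intervalIntegral.integral_of_le hab, ← integral_Icc_eq_integral_Ioc,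
    ofReal_integral_eq_lintegral_ofReal
      (Continuous.integrableOn_Icc (by fun_prop))
      (ae_restrict_of_forall_mem measurableSet_Icc fun x hx ↦ by
        have hrx := hr0 x hx
        positivity)]
  refine setLIntegral_congr_fun measurableSet_Icc fun x hx ↦ ?_
  have hrx := hr0 x hx
  rw [ENNReal.ofReal_div_of_pos (by positivity), ENNReal.ofReal_pow (by positivity),
    ENNReal.ofReal_natCast]

end Volume

lemma convex_unitDisk : Convex ℝ {q : ℝ × ℝ | q.1 ^ 2 + q.2 ^ 2 ≤ 1} := by
  have hsq : ConvexOn ℝ Set.univ fun t : ℝ ↦ t ^ 2 := even_two.convexOn_pow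
  simpa using ((hsq.comp_linearMap (LinearMap.fst ℝ ℝ ℝ)).add
    (hsq.comp_linearMap (LinearMap.snd ℝ ℝ ℝ))).convex_le 1

lemma sq_add_sq_le_one_iff {x t : ℝ} (ht : 0 ≤ t) :
    x ^ 2 + t ^ 2 ≤ 1 ↔ x ∈ Set.Icc (-1) 1 ∧ t ≤ √(1 - x ^ 2) := by
  rw [Set.mem_Icc, ← abs_le, ← sq_le_one_iff_abs_le_one]
  constructor
  · exact fun h ↦ ⟨by linarith [sq_nonneg t], le_sqrt_of_sq_le (by linarith)⟩
  · rintro ⟨hx, hxt⟩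
    linarith [(le_sqrt ht (by linarith)).mp hxt]

theorem volume_convexHull_axisCopies_unitDisk (ι : Type*) [Fintype ι] [DecidableEq ι] [Nonempty ι] :
    volume (convexHull ℝ (axisCopies ι {q : ℝ × ℝ | q.1 ^ 2 + q.2 ^ 2 ≤ 1})) =
      ENNReal.ofReal (∫ x in (-1)..1,
        (2 * √(1 - x ^ 2)) ^ Fintype.card ι / (Fintype.card ι).factorial) := by
  rw [convexHull_axisCopies convex_unitDisk (by simp),
    ← volume_setOf_mem_Icc_sum_abs_le (by norm_num) (by fun_prop) (fun _ _ ↦ sqrt_nonneg _)]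
  congr 1 with p
  exact sq_add_sq_le_one_iff (by positivity)

lemma integral_two_mul_sqrt_one_sub_sq_sq_div_two :
    ∫ x in (-1 : ℝ)..1, (2 * √(1 - x ^ 2)) ^ 2 / 2 = 8 / 3 := by
  have hsq : ∀ x ∈ Set.uIcc (-1 : ℝ) 1, (2 * √(1 - x ^ 2)) ^ 2 / 2 = 2 - 2 * x ^ 2 := by
    intro x hx
    rw [Set.uIcc_of_le (by norm_num), Set.mem_Icc, ← abs_le, ← sq_le_one_iff_abs_le_one] at hx
    rw [mul_pow, sq_sqrt (by linarith)]
    ring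
  rw [intervalIntegral.integral_congr hsq]
  norm_num [integral_pow]

lemma measure_convexHull_image {V W : Type*}
    [AddCommGroup V] [Module ℝ V] [TopologicalSpace V] [MeasurableSpace V] [BorelSpace V]
    [AddCommGroup W] [Module ℝ W] [TopologicalSpace W] [MeasurableSpace W] [BorelSpace W]
    {μ : Measure V} {ν : Measure W} (e : V ≃L[ℝ] W) (he : MeasurePreserving e μ ν) (s : Set V) :
    ν (convexHull ℝ (e '' s)) = μ (convexHull ℝ s) := by
  have himage : convexHull ℝ (e '' s) = e '' convexHull ℝ s :=
    (LinearMap.image_convexHull e.toLinearMap s).symm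
  rw [himage, ← he.measure_preimage_emb e.toHomeomorph.measurableEmbedding,
    Set.preimage_image_eq _ e.injective]

/-- The identification of `ℝ × ℝⁿ` with Euclidean space `ℝⁿ⁺¹` that prepends the first factor as
coordinate `0`; it transports the slices of `axisCopies` to coordinate planes. -/
noncomputable def euclideanConsL (n : ℕ) : (ℝ × (Fin n → ℝ)) ≃L[ℝ] EuclideanSpace ℝ (Fin (n + 1)) :=
  (Fin.consEquivL ℝ fun _ ↦ ℝ).trans (EuclideanSpace.equiv (Fin (n + 1)) ℝ).symm

lemma measurePreserving_euclideanConsL (n : ℕ) : MeasurePreserving (euclideanConsL n) :=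
  have hcons : MeasurePreserving (Fin.consEquivL ℝ fun _ : Fin (n + 1) ↦ ℝ) := by
    convert (volume_preserving_piFinSuccAbove (fun _ : Fin (n + 1) ↦ ℝ) 0).symm using 1
    ext p i
    simp
  (PiLp.volume_preserving_toLp (Fin (n + 1))).comp hcons

lemma union_disks_eq_image_axisCopies :
    {p : EuclideanSpace ℝ (Fin 3) | (p 0) ^ 2 + (p 1) ^ 2 ≤ 1 ∧ p 2 = 0} ∪
       {p : EuclideanSpace ℝ (Fin 3) | (p 0) ^ 2 + (p 2) ^ 2 ≤ 1 ∧ p 1 = 0} =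
    euclideanConsL 2 '' axisCopies (Fin 2) {q : ℝ × ℝ | q.1 ^ 2 + q.2 ^ 2 ≤ 1} := by
  ext p
  obtain ⟨⟨x, y⟩, rfl⟩ := (euclideanConsL 2).surjective p
  rw [(euclideanConsL 2).injective.mem_set_image, mem_axisCopies]
  have hlast : (Fin.cons x y : Fin 3 → ℝ) 2 = y 1 := rfl
  simp [Fin.exists_fin_two, Fin.forall_fin_two, euclideanConsL, hlast]

/-- The Lebesgue volume of the convex hull in ℝ³ of the union of the two
orthogonal unit disks D₁ = {(x,y,0) : x² + y² ≤ 1} and D₂ = {(x,0,z) : x² + z² ≤ 1}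
equals 8/3. -/
theorem volume_convexHull_two_orthogonal_disks_common_center :
    volume (convexHull ℝ
      ({p : EuclideanSpace ℝ (Fin 3) | (p 0) ^ 2 + (p 1) ^ 2 ≤ 1 ∧ p 2 = 0} ∪
       {p : EuclideanSpace ℝ (Fin 3) | (p 0) ^ 2 + (p 2) ^ 2 ≤ 1 ∧ p 1 = 0})) =
    ENNReal.ofReal (8 / 3) := by
  rw [union_disks_eq_image_axisCopies,
    measure_convexHull_image _ (measurePreserving_euclideanConsL 2),
    volume_convexHull_axisCopies_unitDisk, ← integral_two_mul_sqrt_one_sub_sq_sq_div_two]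
  simp only [Fintype.card_fin, Nat.factorial_two, Nat.cast_ofNat]
end

section
/- The surface-area integral 4 ∫_{x=-1}^{1} ∫_{y=0}^{√(1−x²)} √((2 − x²)/(1 − x²)) dy dx equals 2(2 + π). -/
open Real

/-! The integrand does not depend on `y`, and the fibre over `x` has length `√(1 - x²)`, which
cancels the denominator: the inner integral is `√(2 - x²)`. What remains is the area under the
circle of radius `√2` over `[-1, 1]`, namely two right triangles with legs `1, 1` and a
sector of angle `π / 2`, in total `1 + π / 2`. -/

section FibreIntegral

open Set

theorem integral_const_sqrt_div_eq_sqrt (c : ℝ) {w : ℝ} (hw : 0 < w) :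
    ∫ _y in (0 : ℝ)..√w, √(c / w) = √c := by
  rw [intervalIntegral.integral_const, sub_zero, smul_eq_mul, ← sqrt_mul hw.le,
    mul_div_cancel₀ c hw.ne']

theorem integral_integral_sqrt_div_eq_integral_sqrt {a b : ℝ} (f : ℝ → ℝ) {w : ℝ → ℝ}
    (hw : ∀ x ∈ uIoo a b, 0 < w x) :
    ∫ x in a..b, ∫ _y in (0 : ℝ)..√(w x), √(f x / w x) = ∫ x in a..b, √(f x) :=
  intervalIntegral.integral_congr_uIoo fun x hx ↦ integral_const_sqrt_div_eq_sqrt (f x) (hw x hx)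

end FibreIntegral

section CircularSegment

open Set

variable {a b r x : ℝ}

theorem sq_sub_sq_pos_of_mem_Ioo (hx : x ∈ Ioo (-r) r) : 0 < r ^ 2 - x ^ 2 :=
  sub_pos.2 (sq_lt_sq' hx.1 hx.2)

theorem hasDerivAt_arcsin_div (hx : x ∈ Ioo (-r) r) :
    HasDerivAt (fun t ↦ arcsin (t / r)) (1 / √(r ^ 2 - x ^ 2)) x := by
  have hr : 0 < r := by linarith [hx.1, hx.2]
  have hgt : -1 < x / r := by rw [lt_div_iff₀ hr]; linarith [hx.1]
  have hlt : x / r < 1 := (div_lt_one hr).2 hx.2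
  have hsqrt : √(1 - (x / r) ^ 2) = √(r ^ 2 - x ^ 2) / r := by
    rw [div_pow, one_sub_div (pow_ne_zero 2 hr.ne'), sqrt_div' _ (sq_nonneg r), sqrt_sq hr.le]
  refine ((hasDerivAt_arcsin hgt.ne' hlt.ne).comp x
    ((hasDerivAt_id x).div_const r)).congr_deriv ?_
  rw [hsqrt, one_div_div, div_mul_div_cancel₀' hr.ne']

theorem hasDerivAt_mul_sqrt_sub_sq {c : ℝ} (hx : 0 < c - x ^ 2) :
    HasDerivAt (fun t ↦ t * √(c - t ^ 2)) (√(c - x ^ 2) - x ^ 2 / √(c - x ^ 2)) x := by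
  have hsqrt : HasDerivAt (fun t ↦ √(c - t ^ 2)) (-(x / √(c - x ^ 2))) x := by
    refine (((hasDerivAt_pow 2 x).const_sub c).sqrt hx.ne').congr_deriv ?_
    field_simp
    norm_num
  refine ((hasDerivAt_id' x).mul hsqrt).congr_deriv ?_
  ring

/-- The signed area under the circle of radius `r` between the abscissae `0` and `x`, for
`|x| ≤ r`: a right triangle with legs `x` and `√(r ^ 2 - x ^ 2)`, and a circular sector of angle
`arcsin (x / r)`. -/
noncomputable def circularArea (r x : ℝ) : ℝ :=
  (x * √(r ^ 2 - x ^ 2) + r ^ 2 * arcsin (x / r)) / 2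

theorem continuous_circularArea (r : ℝ) : Continuous (circularArea r) := by
  unfold circularArea
  fun_prop

theorem circularArea_neg (r x : ℝ) : circularArea r (-x) = -circularArea r x := by
  simp only [circularArea, neg_sq, neg_div, arcsin_neg]
  ring

theorem hasDerivAt_circularArea (hx : x ∈ Ioo (-r) r) :
    HasDerivAt (circularArea r) (√(r ^ 2 - x ^ 2)) x := by
  have hpos : 0 < r ^ 2 - x ^ 2 := sq_sub_sq_pos_of_mem_Ioo hx
  have hderiv := ((hasDerivAt_mul_sqrt_sub_sq hpos).add
    ((hasDerivAt_arcsin_div hx).const_mul (r ^ 2))).div_const 2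
  refine hderiv.congr_deriv ?_
  calc (√(r ^ 2 - x ^ 2) - x ^ 2 / √(r ^ 2 - x ^ 2) + r ^ 2 * (1 / √(r ^ 2 - x ^ 2))) / 2
      = (√(r ^ 2 - x ^ 2) + (r ^ 2 - x ^ 2) / √(r ^ 2 - x ^ 2)) / 2 := by ring
    _ = √(r ^ 2 - x ^ 2) := by rw [div_sqrt, add_self_div_two]

theorem integral_sqrt_sq_sub_sq (ha : a ∈ Icc (-r) r) (hb : b ∈ Icc (-r) r) :
    ∫ x in a..b, √(r ^ 2 - x ^ 2) = circularArea r b - circularArea r a := by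
  have hcont : Continuous fun x : ℝ ↦ √(r ^ 2 - x ^ 2) := by fun_prop
  refine intervalIntegral.integral_eq_sub_of_hasDeriv_right
    (continuous_circularArea r).continuousOn (fun x hx ↦ ?_) (hcont.intervalIntegrable a b)
  exact (hasDerivAt_circularArea (uIoo_subset_Ioo ha hb hx)).hasDerivWithinAt

theorem integral_sqrt_sq_sub_sq_symm (ha : |a| ≤ r) :
    ∫ x in -a..a, √(r ^ 2 - x ^ 2) = a * √(r ^ 2 - a ^ 2) + r ^ 2 * arcsin (a / r) := by
  have hmem : a ∈ Icc (-r) r := abs_le.1 ha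
  have hneg : -a ∈ Icc (-r) r := abs_le.1 ((abs_neg a).trans_le ha)
  rw [integral_sqrt_sq_sub_sq hneg hmem, circularArea_neg, circularArea]
  ring

end CircularSegment

theorem arcsin_one_div_sqrt_two : arcsin (1 / √2) = π / 4 := by
  rw [← sqrt_div_self', ← sin_pi_div_four]
  exact arcsin_sin (by linarith [pi_pos]) (by linarith [pi_pos])

theorem integral_sqrt_two_sub_sq : ∫ x in (-1 : ℝ)..1, √(2 - x ^ 2) = 1 + π / 2 := by
  have hsq : √2 ^ 2 = (2 : ℝ) := sq_sqrt zero_le_two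
  have hone : |(1 : ℝ)| ≤ √2 := by rw [abs_one, one_le_sqrt]; exact one_le_two
  calc ∫ x in (-1 : ℝ)..1, √(2 - x ^ 2)
      = 1 * √(2 - 1 ^ 2) + 2 * arcsin (1 / √2) := by
        simpa only [hsq] using integral_sqrt_sq_sub_sq_symm hone
    _ = 1 + π / 2 := by
        rw [arcsin_one_div_sqrt_two, one_pow, show (2 : ℝ) - 1 = 1 by norm_num, sqrt_one]
        ring

/-- 4 ∫_{x=-1}^{1} ∫_{y=0}^{√(1−x²)} √((2 − x²)/(1 − x²)) dy dx = 2(2 + π). -/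
theorem surface_area_integral_example_one :
    4 * ∫ x in (-1 : ℝ)..1, ∫ _y in (0 : ℝ)..Real.sqrt (1 - x ^ 2),
        Real.sqrt ((2 - x ^ 2) / (1 - x ^ 2)) =
      2 * (2 + Real.pi) := by
  have hwidth : ∀ x ∈ Set.uIoo (-1 : ℝ) 1, 0 < 1 - x ^ 2 := by
    intro x hx
    rw [Set.uIoo_of_le (by norm_num)] at hx
    simpa only [one_pow] using sq_sub_sq_pos_of_mem_Ioo hx
  rw [integral_integral_sqrt_div_eq_integral_sqrt _ hwidth, integral_sqrt_two_sub_sq]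
  ring
end

section
/- One has (2/π) ∫_{x=-1}^{1} ∫_{y=0}^{√(1−x²)} 1/((2 − x²)√(1 − x²)) dy dx + (2/π) ∫_{θ=0}^{π} arccos(1/√(2 − cos²θ)) dθ = −(1/π) ( 2√2 · ln(−1 + √2) − 4 Li₂(−1 + √2) + 4 Li₂(1 − √2) ), where Li₂ denotes the dilogarithm. -/
open Real

/-- The dilogarithm Li₂(x) = ∑_{k=1}^∞ x^k / k². -/
noncomputable def Li2 (x : ℝ) : ℝ := ∑' k : ℕ, x ^ (k + 1) / ((k : ℝ) + 1) ^ 2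

/-!
The first integral loses its inner variable and becomes the elementary `∫ 1 / (2 - x²)`.

For the second, the integrand equals `arctan (sin θ)`. Expanding `-log (1 - b e^{iθ})` and taking
imaginary parts gives `arctan (b sin θ / (1 - b cos θ)) = ∑ bⁿ sin (nθ) / n`, whose integral over
`[0, π]` is `∑ bⁿ (1 - (-1)ⁿ) / n² = Li₂ b - Li₂ (-b)`. The tangent addition formula combines the
values at `b = a` and `b = -a` into `arctan (2a / (1 - a²) · sin θ)`, and `2a / (1 - a²) = 1` for
`a = √2 - 1 = tan (π / 8)`.
-/

open Set intervalIntegral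

theorem integral_integral_div_eq {f g : ℝ → ℝ} {a b : ℝ} (hg : ∀ x ∈ uIoo a b, g x ≠ 0) :
    (∫ x in a..b, ∫ _y in (0 : ℝ)..g x, f x / g x) = ∫ x in a..b, f x := by
  refine integral_congr_uIoo fun x hx => ?_
  simp only [integral_const, sub_zero, smul_eq_mul]
  exact mul_div_cancel₀ (f x) (hg x hx)

theorem hasDerivAt_log_add_div_sub {r x : ℝ} (hr : r ≠ 0) (hx : x ^ 2 ≠ r ^ 2) :
    HasDerivAt (fun y => log ((r + y) / (r - y)) / (2 * r)) (1 / (r ^ 2 - x ^ 2)) x := by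
  have h_factor : r ^ 2 - x ^ 2 = (r + x) * (r - x) := sq_sub_sq r x
  have h_prod : (r + x) * (r - x) ≠ 0 := h_factor ▸ sub_ne_zero.mpr hx.symm
  have h_add : r + x ≠ 0 := left_ne_zero_of_mul h_prod
  have h_sub : r - x ≠ 0 := right_ne_zero_of_mul h_prod
  have h_deriv := ((((hasDerivAt_id x).const_add r).div ((hasDerivAt_id x).const_sub r) h_sub).log
    (div_ne_zero h_add h_sub)).div_const (2 * r)
  refine h_deriv.congr_deriv ?_
  simp only [id, Pi.div_apply]
  rw [h_factor]
  field_simp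
  ring

theorem integral_one_div_sq_sub_sq {r a b : ℝ} (hr : r ≠ 0)
    (hab : ∀ x ∈ uIcc a b, x ^ 2 ≠ r ^ 2) :
    ∫ x in a..b, 1 / (r ^ 2 - x ^ 2) =
      log ((r + b) / (r - b)) / (2 * r) - log ((r + a) / (r - a)) / (2 * r) := by
  refine integral_eq_sub_of_hasDerivAt (fun x hx => hasDerivAt_log_add_div_sub hr (hab x hx)) ?_
  refine ContinuousOn.intervalIntegrable (.div (by fun_prop) (by fun_prop) fun x hx => ?_)
  exact sub_ne_zero.mpr (hab x hx).symm

theorem log_sqrt_two_add_one : log (√2 + 1) = -log (√2 - 1) := by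
  rw [← log_inv]
  congr 1
  refine eq_inv_of_mul_eq_one_left ?_
  linear_combination sq_sqrt (show (0 : ℝ) ≤ 2 by norm_num)

theorem integral_one_div_two_sub_sq :
    ∫ x in (-1 : ℝ)..1, 1 / (2 - x ^ 2) = -(√2 * log (√2 - 1)) := by
  have h_sq : √2 ^ 2 = 2 := sq_sqrt (by norm_num)
  have h_one_lt : 1 < √2 := one_lt_sqrt_two
  have h_pole : ∀ x ∈ uIcc (-1 : ℝ) 1, x ^ 2 ≠ √2 ^ 2 := by
    intro x hx
    rw [uIcc_of_le (by norm_num)] at hx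
    nlinarith [hx.1, hx.2]
  have h_integral := integral_one_div_sq_sub_sq (by positivity) h_pole
  rw [h_sq, sub_neg_eq_add, ← sub_eq_add_neg, log_div (by linarith) (by linarith),
    log_div (by linarith) (by linarith), log_sqrt_two_add_one] at h_integral
  rw [h_integral]
  field_simp
  rw [h_sq]
  ring

theorem arg_eq_arctan_of_re_pos {z : ℂ} (hz : 0 < z.re) : z.arg = arctan (z.im / z.re) := by
  obtain ⟨h_lower, h_upper⟩ := abs_lt.mp (Complex.abs_arg_lt_pi_div_two_iff.mpr (Or.inl hz))
  rw [← Complex.tan_arg, arctan_tan h_lower h_upper]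

theorem one_sub_mul_cos_pos {b : ℝ} (hb : |b| < 1) (θ : ℝ) : 0 < 1 - b * cos θ := by
  have h : |b * cos θ| < 1 := by
    rw [abs_mul]
    exact (mul_le_of_le_one_right (abs_nonneg b) (abs_cos_le_one θ)).trans_lt hb
  linarith [(abs_lt.mp h).2]

theorem hasSum_pow_mul_sin_div {b : ℝ} (hb : |b| < 1) (θ : ℝ) :
    HasSum (fun n : ℕ => b ^ n * sin (n * θ) / n) (arctan (b * sin θ / (1 - b * cos θ))) := by
  set z : ℂ := b * Complex.exp (θ * Complex.I) with hz
  have h_norm : ‖z‖ < 1 := by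
    rw [hz, norm_mul, Complex.norm_exp_ofReal_mul_I, Complex.norm_real, mul_one]
    exact hb
  have h_re : (1 - z).re = 1 - b * cos θ := by
    simp [hz, Complex.exp_ofReal_mul_I_re]
  have h_im : (1 - z).im = -(b * sin θ) := by
    simp [hz, Complex.exp_ofReal_mul_I_im]
  have h_log : (-Complex.log (1 - z)).im = arctan (b * sin θ / (1 - b * cos θ)) := by
    rw [Complex.neg_im, Complex.log_im,
      arg_eq_arctan_of_re_pos (h_re ▸ one_sub_mul_cos_pos hb θ), h_re, h_im, neg_div, arctan_neg,
      neg_neg]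
  have h_term (n : ℕ) : (z ^ n / n).im = b ^ n * sin (n * θ) / n := by
    have h_polar : z ^ n = (b ^ n : ℝ) * Complex.exp ((n * θ : ℝ) * Complex.I) := by
      rw [hz, mul_pow, ← Complex.exp_nat_mul]
      push_cast
      rw [mul_assoc]
    rw [Complex.div_natCast_im, h_polar, Complex.im_ofReal_mul, Complex.exp_ofReal_mul_I_im]
  simpa only [h_log, h_term] using
    Complex.hasSum_im (Complex.hasSum_taylorSeries_neg_log h_norm)

theorem integral_sin_nat_mul (n : ℕ) :
    ∫ θ in (0 : ℝ)..π, sin (n * θ) = (1 - (-1) ^ n) / n := by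
  rcases eq_or_ne n 0 with rfl | hn
  · simp
  · rw [integral_comp_mul_left _ (Nat.cast_ne_zero.mpr hn), integral_sin, mul_zero, cos_zero,
      cos_nat_mul_pi, smul_eq_mul, inv_mul_eq_div]

-- The added term at `n = 0` is `x ^ 0 / 0 ^ 2 = 0`.
theorem hasSum_Li2 {x : ℝ} (hx : |x| ≤ 1) : HasSum (fun n : ℕ => x ^ n / (n : ℝ) ^ 2) (Li2 x) := by
  have h_summable : Summable fun n : ℕ => x ^ n / (n : ℝ) ^ 2 := by
    refine .of_norm_bounded (summable_one_div_nat_pow.mpr one_lt_two) fun n => ?_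
    rw [norm_div, norm_pow, norm_pow, norm_natCast, norm_eq_abs]
    gcongr
    exact pow_le_one₀ (abs_nonneg x) hx
  have h_tsum : ∑' n : ℕ, x ^ n / (n : ℝ) ^ 2 = Li2 x := by
    rw [h_summable.tsum_eq_zero_add]
    simp [Li2]
  exact h_tsum ▸ h_summable.hasSum

theorem norm_pow_mul_sin_div_le (b θ : ℝ) (n : ℕ) : ‖b ^ n * sin (n * θ) / n‖ ≤ |b| ^ n := by
  rw [norm_div, norm_mul, norm_pow, norm_natCast, norm_eq_abs, norm_eq_abs]
  rcases eq_or_ne n 0 with rfl | hn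
  · simp
  · refine div_le_of_le_mul₀ n.cast_nonneg (by positivity) ?_
    gcongr
    exact (abs_sin_le_one _).trans (Nat.one_le_cast.mpr (Nat.one_le_iff_ne_zero.mpr hn))

theorem integral_arctan_mul_sin_div {b : ℝ} (hb : |b| < 1) :
    ∫ θ in (0 : ℝ)..π, arctan (b * sin θ / (1 - b * cos θ)) = Li2 b - Li2 (-b) := by
  have h_integral : HasSum (fun n : ℕ => ∫ θ in (0 : ℝ)..π, b ^ n * sin (n * θ) / n)
      (∫ θ in (0 : ℝ)..π, arctan (b * sin θ / (1 - b * cos θ))) :=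
    hasSum_integral_of_dominated_convergence (fun n _ => |b| ^ n)
      (fun _ => Continuous.aestronglyMeasurable (by fun_prop))
      (fun n => .of_forall fun θ _ => norm_pow_mul_sin_div_le b θ n)
      (.of_forall fun _ _ => summable_geometric_of_lt_one (abs_nonneg b) hb)
      intervalIntegrable_const
      (.of_forall fun θ _ => hasSum_pow_mul_sin_div hb θ)
  have h_term (n : ℕ) : (∫ θ in (0 : ℝ)..π, b ^ n * sin (n * θ) / n) =
      b ^ n / (n : ℝ) ^ 2 - (-b) ^ n / (n : ℝ) ^ 2 := by
    rw [integral_div, integral_const_mul, integral_sin_nat_mul, neg_pow]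
    ring
  simp only [h_term] at h_integral
  exact h_integral.unique ((hasSum_Li2 hb.le).sub (hasSum_Li2 ((abs_neg b).trans_le hb.le)))

theorem arctan_sub_arctan_neg_eq_arctan_mul_sin {a : ℝ} (ha : |a| < 1) (θ : ℝ) :
    arctan (a * sin θ / (1 - a * cos θ)) - arctan (-a * sin θ / (1 - -a * cos θ)) =
      arctan (2 * a / (1 - a ^ 2) * sin θ) := by
  have h_sq : 0 < 1 - a ^ 2 := sub_pos.mpr ((sq_lt_one_iff_abs_lt_one a).mpr ha)
  have h_sub : 0 < 1 - a * cos θ := one_sub_mul_cos_pos ha θ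
  have h_add : 0 < 1 + a * cos θ := by
    simpa using one_sub_mul_cos_pos ((abs_neg a).trans_lt ha) θ
  have h_odd : -a * sin θ / (1 - -a * cos θ) = -(a * sin θ / (1 + a * cos θ)) := by
    rw [neg_mul, neg_mul, sub_neg_eq_add, neg_div]
  have h_prod : 1 - a * sin θ / (1 - a * cos θ) * (a * sin θ / (1 + a * cos θ)) =
      (1 - a ^ 2) / ((1 - a * cos θ) * (1 + a * cos θ)) := by
    field_simp
    linear_combination (-a ^ 2) * sin_sq_add_cos_sq θ
  have h_prod_lt : a * sin θ / (1 - a * cos θ) * (a * sin θ / (1 + a * cos θ)) < 1 := by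
    rw [← sub_pos, h_prod]
    positivity
  rw [h_odd, arctan_neg, sub_neg_eq_add, arctan_add h_prod_lt, h_prod]
  congr 1
  field_simp
  ring

theorem intervalIntegrable_arctan_mul_sin_div {b : ℝ} (hb : |b| < 1) (x y : ℝ) :
    IntervalIntegrable (fun θ => arctan (b * sin θ / (1 - b * cos θ)))
      MeasureTheory.volume x y := by
  have h_quot : Continuous fun θ => b * sin θ / (1 - b * cos θ) :=
    .div (by fun_prop) (by fun_prop) fun θ => (one_sub_mul_cos_pos hb θ).ne'
  exact (continuous_arctan.comp h_quot).intervalIntegrable x y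

theorem integral_arctan_mul_sin {a : ℝ} (ha : |a| < 1) :
    ∫ θ in (0 : ℝ)..π, arctan (2 * a / (1 - a ^ 2) * sin θ) = 2 * (Li2 a - Li2 (-a)) := by
  have hna : |-a| < 1 := (abs_neg a).trans_lt ha
  simp only [← arctan_sub_arctan_neg_eq_arctan_mul_sin ha]
  rw [integral_sub (intervalIntegrable_arctan_mul_sin_div ha 0 π)
      (intervalIntegrable_arctan_mul_sin_div hna 0 π),
    integral_arctan_mul_sin_div ha, integral_arctan_mul_sin_div hna, neg_neg]
  ring

theorem integral_arctan_sin :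
    ∫ θ in (0 : ℝ)..π, arctan (sin θ) = 2 * (Li2 (√2 - 1) - Li2 (1 - √2)) := by
  have h_sq : √2 ^ 2 = 2 := sq_sqrt (by norm_num)
  have h_one_lt : 1 < √2 := one_lt_sqrt_two
  have h_abs : |√2 - 1| < 1 := abs_lt.mpr ⟨by linarith, by nlinarith⟩
  have h_slope : 2 * (√2 - 1) / (1 - (√2 - 1) ^ 2) = 1 := by
    rw [div_eq_one_iff_eq (by nlinarith)]
    linear_combination h_sq
  simpa only [h_slope, one_mul, neg_sub] using integral_arctan_mul_sin h_abs

theorem arccos_one_div_sqrt_two_sub_cos_sq {θ : ℝ} (hθ : 0 ≤ sin θ) :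
    arccos (1 / √(2 - cos θ ^ 2)) = arctan (sin θ) := by
  have h : 2 - cos θ ^ 2 = 1 + sin θ ^ 2 := by linarith [sin_sq_add_cos_sq θ]
  rw [h, one_div, arctan_eq_arccos hθ]

theorem integral_integral_one_div_mul_sqrt_one_sub_sq :
    (∫ x in (-1 : ℝ)..1, ∫ _y in (0 : ℝ)..√(1 - x ^ 2), 1 / ((2 - x ^ 2) * √(1 - x ^ 2))) =
      -(√2 * log (√2 - 1)) := by
  have h_height : ∀ x ∈ uIoo (-1 : ℝ) 1, √(1 - x ^ 2) ≠ 0 := by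
    intro x hx
    rw [uIoo_of_le (by norm_num)] at hx
    exact sqrt_ne_zero'.mpr (by nlinarith [hx.1, hx.2])
  simp only [← div_div]
  rw [integral_integral_div_eq h_height, integral_one_div_two_sub_sq]

theorem integral_arccos_one_div_sqrt_two_sub_cos_sq :
    ∫ θ in (0 : ℝ)..π, arccos (1 / √(2 - cos θ ^ 2)) =
      2 * (Li2 (√2 - 1) - Li2 (1 - √2)) := by
  rw [← integral_arctan_sin]
  refine integral_congr_Ioo_of_le pi_pos.le fun θ hθ => ?_
  exact arccos_one_div_sqrt_two_sub_cos_sq (sin_pos_of_mem_Ioo hθ).le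

/-- mean-width identity (indirect approach) for the convex hull of two
orthogonal unit disks through a common center. -/
theorem mean_width_example_one_indirect :
    (2 / Real.pi) * (∫ x in (-1 : ℝ)..1, ∫ _y in (0 : ℝ)..Real.sqrt (1 - x ^ 2),
        1 / ((2 - x ^ 2) * Real.sqrt (1 - x ^ 2))) +
      (2 / Real.pi) * (∫ θ in (0 : ℝ)..Real.pi,
        Real.arccos (1 / Real.sqrt (2 - Real.cos θ ^ 2))) =
    -(1 / Real.pi) * (2 * Real.sqrt 2 * Real.log (-1 + Real.sqrt 2)
      - 4 * Li2 (-1 + Real.sqrt 2) + 4 * Li2 (1 - Real.sqrt 2)) := by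
  rw [integral_integral_one_div_mul_sqrt_one_sub_sq, integral_arccos_one_div_sqrt_two_sub_cos_sq,
    neg_add_eq_sub]
  ring
end

section
/- The Lebesgue volume of the convex hull in ℝ³ of the union of the two unit disks D₁ = {(x,y,−1) : x² + y² ≤ 1} and D₂ = {(x,1,z) : x² + z² ≤ 1} equals π. -/
open Real MeasureTheory

/-!
The shear `(x, y, z) ↦ (x + (y - z) i, z)` preserves volume and carries the two disks to the graphs
of the affine functions `w ↦ -1` and `w ↦ 1 - Im w` over one and the same disk, of centre `i` and
radius `1`, where the first function is at most the second. The convex hull of the two graphs is the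
region between them, so its volume is the integral over the disk of the affine function
`w ↦ 2 - Im w`. Averaging with the reflection of the disk in its centre, this is the area `π` of
the disk times the value `1` of that function at the centre.
-/

section ConvexHull

variable {𝕜 E : Type*} [Field 𝕜] [LinearOrder 𝕜] [IsStrictOrderedRing 𝕜] [AddCommGroup E]
  [Module 𝕜 E] {s : Set E} {f g : E → 𝕜}

theorem convexHull_graphOn_union_graphOn (hf : ConvexOn 𝕜 s f) (hg : ConcaveOn 𝕜 s g)
    (hfg : ∀ x ∈ s, f x ≤ g x) :
    convexHull 𝕜 (s.graphOn f ∪ s.graphOn g) =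
      {p : E × 𝕜 | p.1 ∈ s ∧ p.2 ∈ Set.Icc (f p.1) (g p.1)} := by
  refine (convexHull_min (Set.union_subset ?_ ?_) ?_).antisymm ?_
  · rintro _ ⟨x, hx, rfl⟩
    exact ⟨hx, le_rfl, hfg x hx⟩
  · rintro _ ⟨x, hx, rfl⟩
    exact ⟨hx, hfg x hx, le_rfl⟩
  · rw [show {p : E × 𝕜 | p.1 ∈ s ∧ p.2 ∈ Set.Icc (f p.1) (g p.1)} =
        {p | p.1 ∈ s ∧ f p.1 ≤ p.2} ∩ {p | p.1 ∈ s ∧ p.2 ≤ g p.1} from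
      Set.ext fun _ ↦ and_and_left]
    exact hf.convex_epigraph.inter hg.convex_hypograph
  · rintro ⟨x, t⟩ ⟨hx, ht⟩
    have hsegment : (x, t) ∈ segment 𝕜 (x, f x) (x, g x) := by
      rw [← Prod.image_mk_segment_right, segment_eq_Icc (hfg x hx)]
      exact Set.mem_image_of_mem _ ht
    exact segment_subset_convexHull (.inl (Set.mem_image_of_mem _ hx))
      (.inr (Set.mem_image_of_mem _ hx)) hsegment

end ConvexHull

section Measure

variable {α : Type*} [MeasurableSpace α] {μ : Measure α} {s : Set α}

theorem prod_volume_region_between_cc_eq_lintegral [SFinite μ] {f g : α → ℝ} (hf : Measurable f)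
    (hg : Measurable g) (hs : MeasurableSet s) :
    μ.prod volume {p : α × ℝ | p.1 ∈ s ∧ p.2 ∈ Set.Icc (f p.1) (g p.1)} =
      ∫⁻ x in s, ENNReal.ofReal (g x - f x) ∂μ := by
  rw [Measure.prod_apply (measurableSet_region_between_cc hf hg hs), ← lintegral_indicator hs]
  refine lintegral_congr fun x ↦ ?_
  by_cases hx : x ∈ s
  · have hslice : Prod.mk x ⁻¹' {p : α × ℝ | p.1 ∈ s ∧ p.2 ∈ Set.Icc (f p.1) (g p.1)} =
        Set.Icc (f x) (g x) := Set.ext fun _ ↦ and_iff_right hx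
    rw [hslice, Real.volume_Icc, Set.indicator_of_mem hx]
  · simp [hx]

theorem setLIntegral_eq_mul_of_add_comp_eq {σ : α → α} (hσ : MeasurePreserving σ μ μ)
    (hs : MeasurableSet s) (hσs : σ ⁻¹' s = s) {F : α → ENNReal} (hF : Measurable F) {c : ENNReal}
    (hadd : ∀ x ∈ s, F x + F (σ x) = 2 * c) :
    ∫⁻ x in s, F x ∂μ = c * μ s := by
  have hcomp : ∫⁻ x in s, F (σ x) ∂μ = ∫⁻ x in s, F x ∂μ := by
    simpa only [hσs] using hσ.setLIntegral_comp_preimage hs hF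
  refine (ENNReal.mul_right_inj two_ne_zero ENNReal.ofNat_ne_top).1 ?_
  calc
    2 * ∫⁻ x in s, F x ∂μ = ∫⁻ x in s, F x + F (σ x) ∂μ := by
      rw [lintegral_add_left hF, hcomp, two_mul]
    _ = ∫⁻ _ in s, 2 * c ∂μ := setLIntegral_congr_fun hs hadd
    _ = 2 * (c * μ s) := by rw [setLIntegral_const, mul_assoc]

theorem measurePreserving_prod_add_fst {G : Type*} [Add G] [MeasurableSpace G]
    [MeasurableAdd₂ G] {ν : Measure G} [SFinite ν] [ν.IsAddRightInvariant] [SFinite μ]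
    {h : α → G} (hh : Measurable h) :
    MeasurePreserving (fun p : G × α ↦ (p.1 + h p.2, p.2)) (ν.prod μ) (ν.prod μ) := by
  have hskew : MeasurePreserving (fun p : α × G ↦ (p.1, p.2 + h p.1)) (μ.prod ν) (μ.prod ν) :=
    (MeasurePreserving.id μ).skew_product (g := fun a x ↦ x + h a) (by fun_prop)
      (.of_forall fun a ↦ map_add_right_eq_self ν (h a))
  exact Measure.measurePreserving_swap.comp (hskew.comp Measure.measurePreserving_swap)

end Measure

section ClosedBall

variable {E : Type*} [SeminormedAddCommGroup E] [NormedSpace ℝ E] [MeasurableSpace E] [BorelSpace E]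
  {μ : Measure E} [μ.IsAddLeftInvariant] [μ.IsNegInvariant] {c : E} {r : ℝ}

theorem setLIntegral_closedBall_ofReal_affine (f : E →ᴬ[ℝ] ℝ)
    (hf : ∀ x ∈ Metric.closedBall c r, 0 ≤ f x) :
    ∫⁻ x in Metric.closedBall c r, ENNReal.ofReal (f x) ∂μ =
      ENNReal.ofReal (f c) * μ (Metric.closedBall c r) := by
  have hball (x : E) : c + c - x ∈ Metric.closedBall c r ↔ x ∈ Metric.closedBall c r := by
    rw [mem_closedBall_iff_norm, mem_closedBall_iff_norm', add_sub_right_comm, add_sub_cancel_right]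
  have hreflect (x : E) : f x + f (c + c - x) = 2 * f c := by
    have hx : f (c + c - x) = f c + f.linear (c - x) := by
      simpa [add_sub_right_comm, add_comm] using f.toAffineMap.map_vadd c (c - x)
    have hx' : f.linear (c - x) = f c - f x := f.toAffineMap.linearMap_vsub c x
    linarith
  refine setLIntegral_eq_mul_of_add_comp_eq (Measure.measurePreserving_sub_left μ (c + c))
    Metric.isClosed_closedBall.measurableSet (Set.ext hball)
    (f.continuous.measurable.ennreal_ofReal) fun x hx ↦ ?_
  rw [← ENNReal.ofReal_add (hf x hx) (hf _ ((hball x).2 hx)), hreflect,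
    ENNReal.ofReal_mul zero_le_two, ENNReal.ofReal_ofNat]

theorem prod_volume_convexHull_graphOn_closedBall [SFinite μ] (f g : E →ᴬ[ℝ] ℝ)
    (hfg : ∀ x ∈ Metric.closedBall c r, f x ≤ g x) :
    μ.prod volume (convexHull ℝ
      ((Metric.closedBall c r).graphOn f ∪ (Metric.closedBall c r).graphOn g)) =
      ENNReal.ofReal (g c - f c) * μ (Metric.closedBall c r) := by
  have hball : Convex ℝ (Metric.closedBall c r) := convex_closedBall c r
  have hf : ConvexOn ℝ (Metric.closedBall c r) f :=
    ((convexOn_id convex_univ).comp_affineMap f.toAffineMap).subset (Set.subset_univ _) hball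
  have hg : ConcaveOn ℝ (Metric.closedBall c r) g :=
    ((concaveOn_id convex_univ).comp_affineMap g.toAffineMap).subset (Set.subset_univ _) hball
  rw [convexHull_graphOn_union_graphOn hf hg hfg,
    prod_volume_region_between_cc_eq_lintegral f.continuous.measurable g.continuous.measurable
      Metric.isClosed_closedBall.measurableSet]
  exact setLIntegral_closedBall_ofReal_affine (g - f) fun x hx ↦ sub_nonneg.2 (hfg x hx)

end ClosedBall

theorem measurePreserving_euclideanSpace_to_complex_prod :
    MeasurePreserving (fun p : EuclideanSpace ℝ (Fin 3) ↦ ((⟨p 0, p 1⟩ : ℂ), p 2)) := by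
  have hsplit := volume_preserving_piFinSuccAbove (fun _ : Fin 3 ↦ ℝ) 2
  have hcomplex := (MeasurePreserving.id (volume : Measure ℝ)).prod
    (Complex.volume_preserving_equiv_pi.symm Complex.measurableEquivPi)
  have hcoords := Measure.measurePreserving_swap.comp (hcomplex.comp
    (hsplit.comp (EuclideanSpace.volume_preserving_symm_measurableEquiv_toLp (Fin 3))))
  rw [Measure.volume_eq_prod]
  convert hcoords using 1
  exact funext fun p ↦ Prod.ext (Complex.mk_eq_add_mul_I (p 0) (p 1)) rfl

theorem mem_complex_closedBall_iff {w c : ℂ} {r : ℝ} (hr : 0 ≤ r) :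
    w ∈ Metric.closedBall c r ↔ (w.re - c.re) ^ 2 + (w.im - c.im) ^ 2 ≤ r ^ 2 := by
  rw [Metric.mem_closedBall, Complex.dist_eq_re_im, Real.sqrt_le_left hr]

/-- The linear coordinates `(x, y, z) ↦ (x + (y - z) i, z)` on `ℝ³`, in which both disks lie over
the closed unit disk of `ℂ` centred at `i`. -/
noncomputable def heightShear : EuclideanSpace ℝ (Fin 3) ≃ₗ[ℝ] ℂ × ℝ where
  toFun p := (⟨p 0, p 1 - p 2⟩, p 2)
  invFun q := !₂[q.1.re, q.1.im + q.2, q.2]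
  map_add' p q := Prod.ext (Complex.ext rfl (add_sub_add_comm ..)) rfl
  map_smul' a p := Prod.ext (Complex.ext (by simp) (by simp [mul_sub])) rfl
  left_inv p := by ext i; fin_cases i <;> simp
  right_inv q := by ext <;> simp

namespace heightShear

@[simp]
theorem apply_eq (p : EuclideanSpace ℝ (Fin 3)) : heightShear p = (⟨p 0, p 1 - p 2⟩, p 2) := rfl

theorem measurePreserving : MeasurePreserving heightShear := by
  have hshear := (measurePreserving_prod_add_fst (μ := (volume : Measure ℝ))
    (ν := (volume : Measure ℂ)) (h := fun t ↦ -(t * Complex.I)) (by fun_prop)).comp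
    measurePreserving_euclideanSpace_to_complex_prod
  rw [Measure.volume_eq_prod]
  convert hshear using 1
  exact funext fun p ↦ Prod.ext
    (Complex.ext (by simp) (by simp [sub_eq_add_neg])) rfl

theorem measurableEmbedding : MeasurableEmbedding heightShear :=
  heightShear.toContinuousLinearEquiv.toHomeomorph.measurableEmbedding

theorem volume_convexHull_preimage (S : Set (ℂ × ℝ)) :
    volume (convexHull ℝ (heightShear ⁻¹' S)) = volume (convexHull ℝ S) := by
  rw [← measurePreserving.measure_preimage_emb measurableEmbedding,
    ← heightShear.image_symm_eq_preimage, ← heightShear.image_symm_eq_preimage]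
  exact congrArg volume (heightShear.symm.toLinearMap.image_convexHull S).symm

theorem preimage_graphOn_neg_one :
    heightShear ⁻¹' (Metric.closedBall Complex.I 1).graphOn (fun _ ↦ -1) =
      {p | p 0 ^ 2 + p 1 ^ 2 ≤ 1 ∧ p 2 = -1} := by
  ext p
  simp only [Set.mem_preimage, apply_eq, Set.mem_graphOn,
    mem_complex_closedBall_iff zero_le_one, Complex.I_re, Complex.I_im, sub_zero, one_pow,
    Set.mem_ofPred_eq]
  rw [eq_comm (a := (-1 : ℝ)), and_congr_left_iff]
  intro hz
  rw [hz, sub_neg_eq_add, add_sub_cancel_right]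

theorem preimage_graphOn_one_sub_im :
    heightShear ⁻¹' (Metric.closedBall Complex.I 1).graphOn (fun w ↦ 1 - w.im) =
      {p | p 0 ^ 2 + p 2 ^ 2 ≤ 1 ∧ p 1 = 1} := by
  ext p
  have htop : 1 - (p 1 - p 2) = p 2 ↔ p 1 = 1 := by constructor <;> intro h <;> linarith
  simp only [Set.mem_preimage, apply_eq, Set.mem_graphOn,
    mem_complex_closedBall_iff zero_le_one, Complex.I_re, Complex.I_im, sub_zero, one_pow,
    Set.mem_ofPred_eq]
  rw [htop, and_congr_left_iff]
  intro hy
  rw [hy, sub_sub_cancel_left, neg_sq]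

end heightShear

theorem volume_convexHull_graphOn_neg_one_union_graphOn_one_sub_im :
    volume (convexHull ℝ ((Metric.closedBall Complex.I 1).graphOn (fun _ ↦ (-1 : ℝ)) ∪
      (Metric.closedBall Complex.I 1).graphOn (fun w ↦ 1 - w.im))) = ENNReal.ofReal π := by
  let bottom : ℂ →ᴬ[ℝ] ℝ := .const ℝ ℂ (-1)
  let top : ℂ →ᴬ[ℝ] ℝ := .const ℝ ℂ 1 - Complex.imCLM.toContinuousAffineMap
  have hle : ∀ w ∈ Metric.closedBall Complex.I 1, bottom w ≤ top w := by
    intro w hw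
    have him : |w.im - 1| ≤ 1 := by
      simpa using (Complex.abs_im_le_norm _).trans (mem_closedBall_iff_norm.1 hw)
    change -1 ≤ 1 - w.im
    linarith [(abs_le.1 him).2]
  have hcentre : top Complex.I - bottom Complex.I = 1 := by simp [bottom, top]
  calc
    _ = ENNReal.ofReal (top Complex.I - bottom Complex.I) *
          volume (Metric.closedBall Complex.I 1) :=
      prod_volume_convexHull_graphOn_closedBall bottom top hle
    _ = NNReal.pi := by simp [hcentre]
    _ = ENNReal.ofReal π := (ENNReal.ofReal_coe_nnreal (p := NNReal.pi)).symm

/-- The Lebesgue volume of the convex hull in ℝ³ of the union of the two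
unit disks D₁ = {(x,y,−1) : x² + y² ≤ 1} and D₂ = {(x,1,z) : x² + z² ≤ 1} equals π. -/
theorem volume_convexHull_example_two :
    volume (convexHull ℝ
      ({p : EuclideanSpace ℝ (Fin 3) | (p 0) ^ 2 + (p 1) ^ 2 ≤ 1 ∧ p 2 = -1} ∪
       {p : EuclideanSpace ℝ (Fin 3) | (p 0) ^ 2 + (p 2) ^ 2 ≤ 1 ∧ p 1 = 1})) =
    ENNReal.ofReal Real.pi := by
  rw [← heightShear.preimage_graphOn_neg_one, ← heightShear.preimage_graphOn_one_sub_im,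
    ← Set.preimage_union, heightShear.volume_convexHull_preimage,
    volume_convexHull_graphOn_neg_one_union_graphOn_one_sub_im]
end

section
/- The convex hull in ℝ³ of the union of the two unit disks D₁ = {(x,y,−1) : x² + y² ≤ 1} and D₂ = {(x,1,z) : x² + z² ≤ 1} equals the set {(x,y,z) : x² ≤ 1, −1 ≤ z, y ≤ 1, −√(1 − x²) + y − 1 ≤ z ≤ √(1 − x²) + y − 1}. -/
open Real

/-!
Sliding `p` in the direction `(0, 1, 1)` changes neither `p 0` nor `p 2 - p 1 + 1`, and both `D₁`
and `D₂` are sections of the cylinder `x² + (z - y + 1)² ≤ 1` with this axis, by `z = -1` and by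
`y = 1`. Along each ruling of the cylinder the plane `z = -1` comes no later than the plane `y = 1`,
so the part of the ruling between the two planes is a segment joining `D₁` to `D₂`.
Conversely, the part of the cylinder with `-1 ≤ z` and `y ≤ 1` is convex and contains both disks.
-/

section OrderedField

variable {𝕜 E : Type*} [Field 𝕜] [LinearOrder 𝕜] [IsStrictOrderedRing 𝕜] [AddCommGroup E]
  [Module 𝕜 E]

section ConvexHullSections

variable {C : Set E} {f g : E →ₗ[𝕜] 𝕜} {v : E} {a b : 𝕜}

lemma le_of_section_subset_halfSpace (hv : ∀ p ∈ C, ∀ t : 𝕜, t • v + p ∈ C) (hf : 0 < f v)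
    (hg : 0 < g v) (hfg : ∀ p ∈ C, f p = a → g p ≤ b) {p : E} (hp : p ∈ C) (hgp : g p = b) :
    a ≤ f p := by
  -- If `f p < a`, sliding `p` forward to the section `f = a` would push `g` above `b`.
  let t := (a - f p) / f v
  have hft : t * f v = a - f p := div_mul_cancel₀ _ hf.ne'
  have hgt : t * g v ≤ 0 := by
    have hgb : g (t • v + p) ≤ b := hfg _ (hv p hp t) (by simp [hft])
    simpa [hgp] using hgb
  have ht : t ≤ 0 := nonpos_of_mul_nonpos_left hgt hg
  linarith [mul_nonpos_of_nonpos_of_nonneg ht hf.le]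

lemma mem_convexHull_union_sections (hv : ∀ p ∈ C, ∀ t : 𝕜, t • v + p ∈ C) (hf : 0 < f v)
    (hg : 0 < g v) {p : E} (hp : p ∈ C) (hfp : a ≤ f p) (hgp : g p ≤ b) :
    p ∈ convexHull 𝕜 ({p ∈ C | f p = a} ∪ {p ∈ C | g p = b}) := by
  let s := (a - f p) / f v
  let t := (b - g p) / g v
  have hs : f (s • v + p) = a := by simp [s, hf.ne']
  have ht : g (t • v + p) = b := by simp [t, hg.ne']
  have hpst : p ∈ segment 𝕜 (s • v + p) (t • v + p) :=
    mem_segment_iff_wbtw.2 <| wbtw_smul_vadd_smul_vadd_of_nonpos_of_nonneg p v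
      (div_nonpos_of_nonpos_of_nonneg (sub_nonpos.2 hfp) hf.le)
      (div_nonneg (sub_nonneg.2 hgp) hg.le)
  have hsC : s • v + p ∈ {q ∈ C | f q = a} := ⟨hv p hp s, hs⟩
  have htC : t • v + p ∈ {q ∈ C | g q = b} := ⟨hv p hp t, ht⟩
  exact segment_subset_convexHull (.inl hsC) (.inr htC) hpst

theorem convexHull_union_sections (hC : Convex 𝕜 C) (hv : ∀ p ∈ C, ∀ t : 𝕜, t • v + p ∈ C)
    (hf : 0 < f v) (hg : 0 < g v) (hfg : ∀ p ∈ C, f p = a → g p ≤ b) :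
    convexHull 𝕜 ({p ∈ C | f p = a} ∪ {p ∈ C | g p = b}) = {p ∈ C | a ≤ f p ∧ g p ≤ b} := by
  refine subset_antisymm (convexHull_min ?_ ?_) fun p ⟨hp, hfp, hgp⟩ ↦
    mem_convexHull_union_sections hv hf hg hp hfp hgp
  · rintro p (⟨hp, hfp⟩ | ⟨hp, hgp⟩)
    · exact ⟨hp, hfp.ge, hfg p hp hfp⟩
    · exact ⟨hp, le_of_section_subset_halfSpace hv hf hg hfg hp hgp, hgp.le⟩
  · exact hC.inter <| (convex_halfSpace_ge f.isLinear a).inter (convex_halfSpace_le g.isLinear b)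

end ConvexHullSections

lemma convex_setOf_sq_add_sq_le_s6 (f g : E →ᵃ[𝕜] 𝕜) (r : 𝕜) :
    Convex 𝕜 {p | f p ^ 2 + g p ^ 2 ≤ r} := by
  have hsq : ConvexOn 𝕜 Set.univ fun x : 𝕜 ↦ x ^ 2 := even_two.convexOn_pow
  simpa using ((hsq.comp_affineMap f).add (hsq.comp_affineMap g)).convex_le r

end OrderedField

lemma sq_add_sq_le_iff_sqrt {r x w : ℝ} :
    x ^ 2 + w ^ 2 ≤ r ↔ x ^ 2 ≤ r ∧ -√(r - x ^ 2) ≤ w ∧ w ≤ √(r - x ^ 2) := by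
  rw [← le_sub_iff_add_le']
  constructor
  · intro h
    have hx : 0 ≤ r - x ^ 2 := (sq_nonneg w).trans h
    exact ⟨sub_nonneg.1 hx, (Real.sq_le hx).1 h⟩
  · rintro ⟨hx, hw⟩
    exact (Real.sq_le (sub_nonneg.2 hx)).2 hw

/-- The solid cylinder with axis direction `(0, 1, 1)` whose sections by the planes `z = -1` and
`y = 1` are the disks `D₁` and `D₂`. -/
def diskCylinder : Set (EuclideanSpace ℝ (Fin 3)) :=
  {p | p 0 ^ 2 + (p 2 - p 1 + 1) ^ 2 ≤ 1}

namespace diskCylinder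

lemma convex : Convex ℝ diskCylinder := by
  let coord (i : Fin 3) : EuclideanSpace ℝ (Fin 3) →ᵃ[ℝ] ℝ := (EuclideanSpace.projₗ i).toAffineMap
  exact convex_setOf_sq_add_sq_le_s6 (coord 0) (coord 2 - coord 1 + AffineMap.const ℝ _ 1) 1

lemma smul_add_mem {p : EuclideanSpace ℝ (Fin 3)} (hp : p ∈ diskCylinder) (t : ℝ) :
    t • !₂[0, 1, 1] + p ∈ diskCylinder := by
  simpa [diskCylinder] using hp

lemma sep_eq_disk_one :
    {p ∈ diskCylinder | p 2 = -1} = {p | p 0 ^ 2 + p 1 ^ 2 ≤ 1 ∧ p 2 = -1} := by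
  ext p
  refine and_congr_left fun hp ↦ ?_
  have hcross : p 2 - p 1 + 1 = -p 1 := by rw [hp]; ring
  simp [diskCylinder, hcross]

lemma sep_eq_disk_two :
    {p ∈ diskCylinder | p 1 = 1} = {p | p 0 ^ 2 + p 2 ^ 2 ≤ 1 ∧ p 1 = 1} := by
  ext p
  refine and_congr_left fun hp ↦ ?_
  simp [diskCylinder, hp]

lemma apply_one_le_one_of_apply_two_eq {p : EuclideanSpace ℝ (Fin 3)} (hp : p ∈ diskCylinder)
    (hz : p 2 = -1) : p 1 ≤ 1 := by
  have hdisk : p 0 ^ 2 + p 1 ^ 2 ≤ 1 := (sep_eq_disk_one.subset ⟨hp, hz⟩).1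
  have hsq : p 1 ^ 2 ≤ 1 := by linarith [sq_nonneg (p 0)]
  exact le_of_abs_le ((sq_le_one_iff_abs_le_one _).1 hsq)

lemma mem_iff_sqrt {p : EuclideanSpace ℝ (Fin 3)} :
    p ∈ diskCylinder ↔ p 0 ^ 2 ≤ 1 ∧ -√(1 - p 0 ^ 2) + p 1 - 1 ≤ p 2 ∧
      p 2 ≤ √(1 - p 0 ^ 2) + p 1 - 1 := by
  refine sq_add_sq_le_iff_sqrt.trans (and_congr_right' (and_congr ?_ ?_)) <;>
    constructor <;> intro h <;> linarith

end diskCylinder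

/-- The convex hull in ℝ³ of the union of the two unit disks
D₁ = {(x,y,−1) : x² + y² ≤ 1} and D₂ = {(x,1,z) : x² + z² ≤ 1} equals
{(x,y,z) : x² ≤ 1, −1 ≤ z, y ≤ 1, −√(1 − x²) + y − 1 ≤ z ≤ √(1 − x²) + y − 1}. -/
theorem convexHull_example_two_eq :
    convexHull ℝ
      ({p : EuclideanSpace ℝ (Fin 3) | (p 0) ^ 2 + (p 1) ^ 2 ≤ 1 ∧ p 2 = -1} ∪
       {p : EuclideanSpace ℝ (Fin 3) | (p 0) ^ 2 + (p 2) ^ 2 ≤ 1 ∧ p 1 = 1}) =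
    {p : EuclideanSpace ℝ (Fin 3) |
      (p 0) ^ 2 ≤ 1 ∧ -1 ≤ p 2 ∧ p 1 ≤ 1 ∧
      -Real.sqrt (1 - (p 0) ^ 2) + p 1 - 1 ≤ p 2 ∧
      p 2 ≤ Real.sqrt (1 - (p 0) ^ 2) + p 1 - 1} := by
  rw [← diskCylinder.sep_eq_disk_one, ← diskCylinder.sep_eq_disk_two]
  calc
    _ = {p ∈ diskCylinder | -1 ≤ p 2 ∧ p 1 ≤ 1} :=
      convexHull_union_sections (f := EuclideanSpace.projₗ 2) (g := EuclideanSpace.projₗ 1)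
        (v := !₂[0, 1, 1]) diskCylinder.convex (fun _ ↦ diskCylinder.smul_add_mem)
        (by simp) (by simp) fun _ ↦ diskCylinder.apply_one_le_one_of_apply_two_eq
    _ = _ := by
      ext p
      rw [Set.mem_sep_iff, diskCylinder.mem_iff_sqrt, Set.mem_ofPred_eq]
      tauto
end

section
/- One has ∫_{v=-1}^{1} (1/√(1 − v²)) · arccos( v / √(1 + v²) ) dv = π² / 2. -/
open Real

open MeasureTheory Set
open scoped Interval

/-!
Since `arccos = π / 2 - arcsin` and `arcsin` is odd, integrating `arccos ∘ h` with `h` odd against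
an even weight over `[-a, a]` leaves only the constant `π / 2`. Here `h v = v / √(1 + v ^ 2)`, and
the weight `1 / √(1 - v ^ 2)`, the derivative of `arcsin`, has total mass `π` on `[-1, 1]`.
-/

theorem integral_eq_zero_of_odd {E : Type*} [NormedAddCommGroup E] [NormedSpace ℝ E]
    {f : ℝ → E} (hf : Function.Odd f) (a : ℝ) : ∫ x in -a..a, f x = 0 := by
  have : IsAddTorsionFree E := .of_isTorsionFree ℝ E
  refine self_eq_neg.1 ?_
  calc ∫ x in -a..a, f x = ∫ x in -a..a, f (-x) := by
        rw [intervalIntegral.integral_comp_neg, neg_neg]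
    _ = -∫ x in -a..a, f x := by simp only [hf.eq, intervalIntegral.integral_neg]

theorem abs_arcsin_le_pi_div_two (x : ℝ) : |arcsin x| ≤ π / 2 :=
  abs_le.2 ⟨neg_pi_div_two_le_arcsin x, arcsin_le_pi_div_two x⟩

theorem odd_mul_arcsin_comp {α : Type*} [Neg α] {w h : α → ℝ}
    (hw : Function.Even w) (hh : Function.Odd h) :
    Function.Odd fun x => w x * arcsin (h x) :=
  hw.mul_odd (Function.Odd.comp_odd arcsin_neg hh)

theorem intervalIntegrable_mul_arcsin_comp {μ : Measure ℝ} {w h : ℝ → ℝ} {a b : ℝ}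
    (hw : IntervalIntegrable w μ a b) (hh : AEMeasurable h (μ.restrict (Ι a b))) :
    IntervalIntegrable (fun x => w x * arcsin (h x)) μ a b := by
  rw [intervalIntegrable_iff] at hw ⊢
  exact hw.mul_bdd (measurable_arcsin.comp_aemeasurable hh).aestronglyMeasurable
    (.of_forall fun x => abs_arcsin_le_pi_div_two (h x))

theorem integral_mul_arccos_comp_of_even_of_odd {w h : ℝ → ℝ} {a : ℝ}
    (hw_even : Function.Even w) (hw : IntervalIntegrable w volume (-a) a)
    (hh_odd : Function.Odd h) (hh : AEMeasurable h (volume.restrict (Ι (-a) a))) :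
    ∫ x in -a..a, w x * arccos (h x) = (∫ x in -a..a, w x) * (π / 2) := by
  calc ∫ x in -a..a, w x * arccos (h x)
      = ∫ x in -a..a, (w x * (π / 2) - w x * arcsin (h x)) := by
        simp only [arccos_eq_pi_div_two_sub_arcsin, mul_sub]
    _ = (∫ x in -a..a, w x) * (π / 2) - ∫ x in -a..a, w x * arcsin (h x) := by
        rw [intervalIntegral.integral_sub (hw.mul_const _)
          (intervalIntegrable_mul_arcsin_comp hw hh), intervalIntegral.integral_mul_const]
    _ = (∫ x in -a..a, w x) * (π / 2) := by
        rw [integral_eq_zero_of_odd (odd_mul_arcsin_comp hw_even hh_odd), sub_zero]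

theorem intervalIntegrable_one_div_sqrt_one_sub_sq :
    IntervalIntegrable (fun x : ℝ => 1 / √(1 - x ^ 2)) volume (-1) 1 := by
  simpa only [one_div, sqrt_inv] using
    Polynomial.Chebyshev.intervalIntegrable_sqrt_one_sub_sq_inv

theorem integral_one_div_sqrt_one_sub_sq {a b : ℝ} (ha : a ∈ Icc (-1) 1) (hb : b ∈ Icc (-1) 1) :
    ∫ x in a..b, 1 / √(1 - x ^ 2) = arcsin b - arcsin a := by
  refine intervalIntegral.integral_eq_sub_of_hasDeriv_right continuous_arcsin.continuousOn
    (fun x hx => ?_) (intervalIntegrable_one_div_sqrt_one_sub_sq.mono_set ?_)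
  · have x_gt : -1 < x := (le_min ha.1 hb.1).trans_lt hx.1
    have x_lt : x < 1 := hx.2.trans_le (max_le ha.2 hb.2)
    exact (hasDerivAt_arcsin x_gt.ne' x_lt.ne).hasDerivWithinAt
  · rw [uIcc_of_le (neg_le_self zero_le_one)]
    exact uIcc_subset_Icc ha hb

/-- ∫_{v=-1}^{1} (1/√(1 − v²)) · arccos( v / √(1 + v²) ) dv = π²/2. -/
theorem dihedral_angle_integral_example_two_parametrized :
    (∫ v in (-1 : ℝ)..1,
        (1 / Real.sqrt (1 - v ^ 2)) * Real.arccos (v / Real.sqrt (1 + v ^ 2))) =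
      Real.pi ^ 2 / 2 := by
  have weight_even : Function.Even fun v : ℝ => 1 / √(1 - v ^ 2) := fun v => by
    simp only [neg_sq]
  have arg_odd : Function.Odd fun v : ℝ => v / √(1 + v ^ 2) := fun v => by
    simp only [neg_sq, neg_div]
  have weight_mass : ∫ v in (-1 : ℝ)..1, 1 / √(1 - v ^ 2) = π := by
    rw [integral_one_div_sqrt_one_sub_sq (by simp) (by simp), arcsin_one, arcsin_neg_one]
    ring
  rw [integral_mul_arccos_comp_of_even_of_odd weight_even intervalIntegrable_one_div_sqrt_one_sub_sq
    arg_odd (by fun_prop), weight_mass]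
  ring
end

section
/- One has ∫_{θ=-π/2}^{π/2} ∫_{φ=0}^{π} max{ sin φ − cos φ, √(cos²θ sin²φ + cos²φ) + sin θ sin φ } · sin φ dφ dθ = π(√2 + π)/2. -/
open Real

/-!
In the spherical coordinates `(x, y, z) = (cos θ sin φ, sin θ sin φ, cos φ)` the double integral is
the integral over the hemisphere `x ≥ 0` of the support function of the two disks, which on the unit
sphere depends on `(y, z)` only. Adding its value at `(-y, -z)` turns it into the width
`√(1 - z²) + √(1 - y²) + |y + z|`, so the double integral is half the integral of this width. Each
summand is a function of the height in a fixed direction orthogonal to the `x`-axis, and by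
Archimedes' hat-box theorem the integral of `h (height)` over the hemisphere is `π ∫ h` over
`[-1, 1]`.

For the hat-box theorem, subtract from `h` its mean, so that `∫ h = 0`. Then `h` is the derivative
of `(1 - t²) g t` for a continuous `g`, and `h (height)` is the divergence of the tangential part of
the constant vertical field, multiplied by `g (height)`. This field has no flux through the great
circle `x = 0`.
-/

section HemisphereIntegral

/-- The integral of `F (y, z)` over the half `x ≥ 0` of the unit sphere with respect to surface
measure, in the spherical coordinates `(x, y, z) = (cos θ sin φ, sin θ sin φ, cos φ)`. -/
noncomputable def hemisphereIntegral (F : ℝ × ℝ → ℝ) : ℝ :=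
  ∫ θ in (-(π / 2))..(π / 2), ∫ φ in (0 : ℝ)..π, F (sin θ * sin φ, cos φ) * sin φ

variable {F G : ℝ × ℝ → ℝ}

theorem hemisphereIntegral_congr (h : ∀ v : ℝ × ℝ, v.1 ^ 2 + v.2 ^ 2 ≤ 1 → F v = G v) :
    hemisphereIntegral F = hemisphereIntegral G := by
  refine intervalIntegral.integral_congr fun θ _ ↦ intervalIntegral.integral_congr fun φ _ ↦ ?_
  have mem_disk : (sin θ * sin φ) ^ 2 + cos φ ^ 2 ≤ 1 := by
    nlinarith [sin_sq_add_cos_sq φ, sin_sq_le_one θ, sq_nonneg (sin φ)]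
  exact congrArg (· * sin φ) (h (_, _) mem_disk)

theorem hemisphereIntegral_add (hF : Continuous F) (hG : Continuous G) :
    hemisphereIntegral (fun v ↦ F v + G v) = hemisphereIntegral F + hemisphereIntegral G := by
  have integrable {H : ℝ × ℝ → ℝ} (hH : Continuous H) :
      IntervalIntegrable (fun θ ↦ ∫ φ in (0 : ℝ)..π, H (sin θ * sin φ, cos φ) * sin φ)
        MeasureTheory.volume (-(π / 2)) (π / 2) :=
    (intervalIntegral.continuous_parametric_intervalIntegral_of_continuous'
      (by fun_prop) _ _).intervalIntegrable _ _
  simp only [hemisphereIntegral]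
  rw [← intervalIntegral.integral_add (integrable hF) (integrable hG)]
  refine intervalIntegral.integral_congr fun θ _ ↦ ?_
  simp only [add_mul]
  exact intervalIntegral.integral_add (Continuous.intervalIntegrable (by fun_prop) _ _)
    (Continuous.intervalIntegrable (by fun_prop) _ _)

theorem hemisphereIntegral_const (c : ℝ) : hemisphereIntegral (fun _ ↦ c) = 2 * π * c := by
  simp only [hemisphereIntegral, intervalIntegral.integral_const_mul, integral_sin, cos_zero,
    cos_pi, intervalIntegral.integral_const, smul_eq_mul]
  ring

theorem hemisphereIntegral_comp_neg (F : ℝ × ℝ → ℝ) :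
    hemisphereIntegral (fun v ↦ F (-v)) = hemisphereIntegral F := by
  have reflect_φ (θ : ℝ) : ∫ φ in (0 : ℝ)..π, F (-(sin θ * sin φ, cos φ)) * sin φ =
      ∫ φ in (0 : ℝ)..π, F (sin (-θ) * sin φ, cos φ) * sin φ := by
    simpa using intervalIntegral.integral_comp_sub_left (a := 0) (b := π)
      (fun φ ↦ F (sin (-θ) * sin φ, cos φ) * sin φ) π
  simp only [hemisphereIntegral, reflect_φ]
  simpa using intervalIntegral.integral_comp_neg (a := -(π / 2)) (b := π / 2)
    fun θ ↦ ∫ φ in (0 : ℝ)..π, F (sin θ * sin φ, cos φ) * sin φ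

end HemisphereIntegral

section DSlope

variable {𝕜 E : Type*} [NontriviallyNormedField 𝕜] [NormedAddCommGroup E] [NormedSpace 𝕜 E]
  {f : 𝕜 → E} {a t : 𝕜}

theorem continuous_dslope (hf : Continuous f) (hfa : DifferentiableAt 𝕜 f a) :
    Continuous (dslope f a) := by
  rw [← continuousOn_univ, continuousOn_dslope Filter.univ_mem]
  exact ⟨hf.continuousOn, hfa⟩

theorem deriv_eq_dslope_add_smul_deriv_dslope (ht : t ≠ a) (hf : DifferentiableAt 𝕜 f t) :
    deriv f t = dslope f a t + (t - a) • deriv (dslope f a) t := by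
  have hd : DifferentiableAt 𝕜 (dslope f a) t := (differentiableAt_dslope_of_ne ht).2 hf
  have f_eq : f = fun s ↦ (s - a) • dslope f a s + f a := by
    funext s
    rw [sub_smul_dslope, sub_add_cancel]
  have h := (((hasDerivAt_id' t).sub_const a).fun_smul hd.hasDerivAt).add_const (f a)
  rw [← f_eq, one_smul, add_comm] at h
  exact h.deriv

end DSlope

-- `g` is `t ↦ (∫ s in -1..t, h s) / (1 - t ^ 2)`, extended continuously to `t = ±1`.
theorem exists_one_sub_sq_mul_deriv_sub_eq {h : ℝ → ℝ} (hh : Continuous h)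
    (h_int : ∫ t in (-1 : ℝ)..1, h t = 0) :
    ∃ g : ℝ → ℝ, Continuous g ∧ (∀ t ∈ Set.Ioo (-1) 1, DifferentiableAt ℝ g t) ∧
      ∀ t, (1 - t ^ 2) * deriv g t - 2 * t * g t = h t := by
  let P (t : ℝ) := ∫ s in (-1 : ℝ)..t, h s
  have hP (t : ℝ) : HasDerivAt P (h t) t := (hh.integral_hasStrictDerivAt (-1) t).hasDerivAt
  let Q := dslope P 1
  let R := dslope Q (-1)
  have Q_neg_one : Q (-1) = 0 := by
    rw [show Q (-1) = slope P 1 (-1) from dslope_of_ne P (by norm_num)]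
    simp [P, slope, h_int]
  have Q_eq (t : ℝ) : (t + 1) * R t = Q t := by
    simpa [Q_neg_one] using sub_smul_dslope Q (-1) t
  have hQ {t : ℝ} (ht : t ≠ 1) : DifferentiableAt ℝ Q t :=
    (differentiableAt_dslope_of_ne ht).2 (hP t).differentiableAt
  have R_cont : Continuous R := continuous_dslope
    (continuous_dslope (continuous_iff_continuousAt.2 fun t ↦ (hP t).continuousAt)
      (hP 1).differentiableAt) (hQ (by norm_num))
  refine ⟨fun t ↦ -R t, R_cont.neg, fun t ht ↦
    ((differentiableAt_dslope_of_ne ht.1.ne').2 (hQ ht.2.ne)).neg, fun t ↦ ?_⟩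
  rcases eq_or_ne t 1 with rfl | ht₁
  · have Q_one : Q 1 = h 1 := (dslope_same P 1).trans (hP 1).deriv
    linarith [Q_eq 1]
  have h_eq : h t = Q t + (t - 1) * deriv Q t := (hP t).deriv.symm.trans
    (deriv_eq_dslope_add_smul_deriv_dslope ht₁ (hP t).differentiableAt)
  rcases eq_or_ne t (-1) with rfl | ht₂
  · have R_neg_one : R (-1) = deriv Q (-1) := dslope_same Q (-1)
    linarith
  have deriv_Q : deriv Q t = R t + (t - -1) * deriv R t :=
    deriv_eq_dslope_add_smul_deriv_dslope ht₂ (hQ ht₁)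
  rw [h_eq, deriv_Q, ← Q_eq, deriv.fun_neg]
  ring

section SphereHeight

variable (p q : ℝ)

/-- The inner product of `(0, p, q)` with the point of the unit sphere with spherical coordinates
`x = (θ, φ)`. -/
noncomputable def sphereHeight (x : ℝ × ℝ) : ℝ :=
  p * (sin x.1 * sin x.2) + q * cos x.2

/-- The derivative `∂/∂φ` of `sphereHeight p q`, at `x = (θ, φ)`. -/
noncomputable def sphereHeightDeriv (x : ℝ × ℝ) : ℝ :=
  p * sin x.1 * cos x.2 - q * sin x.2

theorem hasFDerivAt_sphereHeight (x : ℝ × ℝ) :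
    HasFDerivAt (sphereHeight p q)
      ((p * cos x.1 * sin x.2) • .fst ℝ ℝ ℝ + sphereHeightDeriv p q x • .snd ℝ ℝ ℝ) x := by
  have h := ((hasFDerivAt_fst.sin.mul hasFDerivAt_snd.sin).const_mul p).add
    ((hasFDerivAt_snd (𝕜 := ℝ) (p := x)).cos.const_mul q)
  refine h.congr_fderiv ?_
  ext <;> simp [sphereHeightDeriv] <;> ring

theorem hasFDerivAt_sphereHeightDeriv (x : ℝ × ℝ) :
    HasFDerivAt (sphereHeightDeriv p q)
      ((p * cos x.1 * cos x.2) • .fst ℝ ℝ ℝ - sphereHeight p q x • .snd ℝ ℝ ℝ) x := by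
  have h := ((hasFDerivAt_fst.sin.const_mul p).mul hasFDerivAt_snd.cos).sub
    ((hasFDerivAt_snd (𝕜 := ℝ) (p := x)).sin.const_mul q)
  refine h.congr_fderiv ?_
  ext <;> simp [sphereHeight] <;> ring

@[fun_prop]
theorem continuous_sphereHeight : Continuous (sphereHeight p q) :=
  continuous_iff_continuousAt.2 fun x ↦ (hasFDerivAt_sphereHeight p q x).continuousAt

@[fun_prop]
theorem continuous_sphereHeightDeriv : Continuous (sphereHeightDeriv p q) :=
  continuous_iff_continuousAt.2 fun x ↦ (hasFDerivAt_sphereHeightDeriv p q x).continuousAt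

theorem sphereHeight_sq_add_sphereHeightDeriv_sq (x : ℝ × ℝ) :
    sphereHeight p q x ^ 2 + sphereHeightDeriv p q x ^ 2 + (p * cos x.1) ^ 2 = p ^ 2 + q ^ 2 := by
  simp only [sphereHeight, sphereHeightDeriv]
  linear_combination p ^ 2 * sin_sq_add_cos_sq x.1
    + (p ^ 2 * sin x.1 ^ 2 + q ^ 2) * sin_sq_add_cos_sq x.2

variable {p q}

theorem sphereHeight_mem_Ioo (hpq : p ^ 2 + q ^ 2 = 1) {x : ℝ × ℝ}
    (hx : x ∈ Set.Ioo (-(π / 2)) (π / 2) ×ˢ Set.Ioo 0 π) :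
    sphereHeight p q x ∈ Set.Ioo (-1) 1 := by
  have cos_mul_sin_pos : 0 < cos x.1 * sin x.2 :=
    mul_pos (cos_pos_of_mem_Ioo hx.1) (sin_pos_of_mem_Ioo hx.2)
  have lagrange_identity : sphereHeight p q x ^ 2 + (p * cos x.2 - q * (sin x.1 * sin x.2)) ^ 2 =
      1 - (cos x.1 * sin x.2) ^ 2 := by
    simp only [sphereHeight]
    linear_combination ((sin x.1 * sin x.2) ^ 2 + cos x.2 ^ 2) * hpq
      + sin x.2 ^ 2 * sin_sq_add_cos_sq x.1 + sin_sq_add_cos_sq x.2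
  rw [Set.mem_Ioo, ← abs_lt, ← sq_lt_one_iff_abs_lt_one]
  linarith [pow_pos cos_mul_sin_pos 2, sq_nonneg (p * cos x.2 - q * (sin x.1 * sin x.2))]

-- In the frame `∂/∂θ`, `∂/∂φ` the tangential part of `(0, p, q)` is `(p cos θ / sin φ, ∂u/∂φ)`,
-- where `u` is the height. `fluxθ` and `fluxφ` are its components times `g u` and the area density
-- `sin φ`.
theorem hemisphereIntegral_divergence_eq_zero (hpq : p ^ 2 + q ^ 2 = 1) {g h : ℝ → ℝ}
    (hg : Continuous g) (hg_diff : ∀ t ∈ Set.Ioo (-1) 1, DifferentiableAt ℝ g t)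
    (hh : Continuous h) (h_eq : ∀ t, (1 - t ^ 2) * deriv g t - 2 * t * g t = h t) :
    hemisphereIntegral (fun v ↦ h (p * v.1 + q * v.2)) = 0 := by
  let u := sphereHeight p q
  let w := sphereHeightDeriv p q
  let dθ := ContinuousLinearMap.fst ℝ ℝ ℝ
  let dφ := ContinuousLinearMap.snd ℝ ℝ ℝ
  let fluxθ (x : ℝ × ℝ) := p * cos x.1 * g (u x)
  let fluxφ (x : ℝ × ℝ) := sin x.2 * w x * g (u x)
  let gu' (x : ℝ × ℝ) := deriv g (u x) • ((p * cos x.1 * sin x.2) • dθ + w x • dφ)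
  let fluxθ' (x : ℝ × ℝ) := (p * cos x.1) • gu' x + g (u x) • p • (-sin x.1) • dθ
  let fluxφ' (x : ℝ × ℝ) := (sin x.2 * w x) • gu' x +
    g (u x) • (sin x.2 • ((p * cos x.1 * cos x.2) • dθ - u x • dφ) + w x • cos x.2 • dφ)
  have box_eq : Set.Ioo (min (-(π / 2)) (π / 2)) (max (-(π / 2)) (π / 2)) ×ˢ
      Set.Ioo (min 0 π) (max 0 π) = Set.Ioo (-(π / 2)) (π / 2) ×ˢ Set.Ioo 0 π := by
    simp [show -(π / 2) ≤ π / 2 by linarith [pi_pos], pi_pos.le]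
  have hgu {x} (hx : x ∈ Set.Ioo (-(π / 2)) (π / 2) ×ˢ Set.Ioo 0 π) :
      HasFDerivAt (g ∘ u) (gu' x) x :=
    (hg_diff _ (sphereHeight_mem_Ioo hpq hx)).hasDerivAt.comp_hasFDerivAt x
      (hasFDerivAt_sphereHeight p q x)
  have divergence_eq (x) : fluxθ' x (1, 0) + fluxφ' x (0, 1) = h (u x) * sin x.2 := by
    have hu : u x = p * (sin x.1 * sin x.2) + q * cos x.2 := rfl
    have hw : w x = p * sin x.1 * cos x.2 - q * sin x.2 := rfl
    simp only [fluxθ', fluxφ', gu', dθ, dφ, ← h_eq, add_apply, sub_apply, smul_apply,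
      ContinuousLinearMap.coe_fst', ContinuousLinearMap.coe_snd', smul_eq_mul, smul_add, mul_one,
      mul_zero, add_zero, zero_add, zero_sub, mul_neg]
    linear_combination
      deriv g (u x) * sin x.2 * (sphereHeight_sq_add_sphereHeightDeriv_sq p q x + hpq)
      + g (u x) * (cos x.2 * hw + sin x.2 * hu + p * sin x.1 * sin_sq_add_cos_sq x.2)
  have divergence_theorem := MeasureTheory.integral2_divergence_prod_of_hasFDerivAt fluxθ fluxφ
    fluxθ' fluxφ' (-(π / 2)) 0 (π / 2) π (by fun_prop) (by fun_prop)
    (fun x hx ↦ (hasFDerivAt_fst.cos.const_mul p).mul (hgu (box_eq ▸ hx)))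
    (fun x hx ↦ (hasFDerivAt_snd.sin.mul (hasFDerivAt_sphereHeightDeriv p q x)).mul
      (hgu (box_eq ▸ hx)))
    (by
      simp only [divergence_eq]
      exact ContinuousOn.integrableOn_compact (isCompact_uIcc.prod isCompact_uIcc) (by fun_prop))
  simpa [divergence_eq, fluxθ, fluxφ, hemisphereIntegral, u, sphereHeight] using divergence_theorem

end SphereHeight

section HatBox

variable {p q : ℝ} {h : ℝ → ℝ}

theorem hemisphereIntegral_comp_inner_eq_zero (hpq : p ^ 2 + q ^ 2 = 1) (hh : Continuous h)
    (h_int : ∫ t in (-1 : ℝ)..1, h t = 0) :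
    hemisphereIntegral (fun v ↦ h (p * v.1 + q * v.2)) = 0 := by
  obtain ⟨g, hg, hg_diff, h_eq⟩ := exists_one_sub_sq_mul_deriv_sub_eq hh h_int
  exact hemisphereIntegral_divergence_eq_zero hpq hg hg_diff hh h_eq

theorem hemisphereIntegral_comp_inner (hpq : p ^ 2 + q ^ 2 = 1) (hh : Continuous h) :
    hemisphereIntegral (fun v ↦ h (p * v.1 + q * v.2)) = π * ∫ t in (-1 : ℝ)..1, h t := by
  set I := ∫ t in (-1 : ℝ)..1, h t
  have centered_int : ∫ t in (-1 : ℝ)..1, (h t - I / 2) = 0 := by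
    rw [intervalIntegral.integral_sub (hh.intervalIntegrable _ _) (by simp),
      intervalIntegral.integral_const, smul_eq_mul]
    ring
  calc hemisphereIntegral (fun v ↦ h (p * v.1 + q * v.2))
    _ = hemisphereIntegral (fun v ↦ (h (p * v.1 + q * v.2) - I / 2) + I / 2) := by
      simp only [sub_add_cancel]
    _ = hemisphereIntegral (fun v ↦ h (p * v.1 + q * v.2) - I / 2) +
        hemisphereIntegral (fun _ ↦ I / 2) := hemisphereIntegral_add (by fun_prop) (by fun_prop)
    _ = 0 + 2 * π * (I / 2) := by
      rw [hemisphereIntegral_comp_inner_eq_zero (h := fun t ↦ h t - I / 2) hpq (by fun_prop)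
        centered_int, hemisphereIntegral_const]
    _ = π * I := by ring

theorem hemisphereIntegral_sqrt_one_sub_inner_sq (hpq : p ^ 2 + q ^ 2 = 1) :
    hemisphereIntegral (fun v ↦ √(1 - (p * v.1 + q * v.2) ^ 2)) = π ^ 2 / 2 := by
  rw [hemisphereIntegral_comp_inner (h := fun t ↦ √(1 - t ^ 2)) hpq (by fun_prop),
    integral_sqrt_one_sub_sq]
  ring

theorem integral_abs_neg_self {a : ℝ} (ha : 0 ≤ a) : ∫ t in -a..a, |t| = a ^ 2 := by
  have right_half : ∫ t in (0 : ℝ)..a, |t| = a ^ 2 / 2 := by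
    rw [intervalIntegral.integral_congr (g := fun t ↦ t)]
    · simp
    · intro t ht
      rw [Set.uIcc_of_le ha] at ht
      exact abs_of_nonneg ht.1
  have left_half : ∫ t in -a..0, |t| = ∫ t in (0 : ℝ)..a, |t| := by
    simpa using (intervalIntegral.integral_comp_neg (a := 0) (b := a) fun t : ℝ ↦ |t|).symm
  rw [← intervalIntegral.integral_add_adjacent_intervals
    (continuous_abs.intervalIntegrable (-a) 0) (continuous_abs.intervalIntegrable 0 a),
    left_half, right_half]
  ring

theorem hemisphereIntegral_abs_add : hemisphereIntegral (fun v ↦ |v.1 + v.2|) = √2 * π := by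
  have h := hemisphereIntegral_comp_inner (p := 1 / √2) (q := 1 / √2) (by norm_num [div_pow])
    (h := fun t ↦ |√2 * t|) (by fun_prop)
  have rescale (v : ℝ × ℝ) : √2 * (1 / √2 * v.1 + 1 / √2 * v.2) = v.1 + v.2 := by
    field_simp
  simp only [rescale, abs_mul, abs_of_nonneg (sqrt_nonneg 2), intervalIntegral.integral_const_mul,
    integral_abs_neg_self zero_le_one] at h
  rw [h]
  ring

end HatBox

section TwoDiskSupport

/-- The support function of the union of the disks `{x² + y² ≤ 1, z = -1}` and
`{x² + z² ≤ 1, y = 1}` in a unit direction `(x, y, z)`, as a function of `(y, z)`. -/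
noncomputable def twoDiskSupport (v : ℝ × ℝ) : ℝ :=
  max (√(1 - v.2 ^ 2) - v.2) (√(1 - v.1 ^ 2) + v.1)

@[fun_prop]
theorem continuous_twoDiskSupport : Continuous twoDiskSupport := by
  unfold twoDiskSupport
  fun_prop

theorem abs_sqrt_sub_sqrt_le_abs_add {y z : ℝ} (h : y ^ 2 + z ^ 2 ≤ 1) :
    |√(1 - z ^ 2) - √(1 - y ^ 2)| ≤ |y + z| := by
  set a := √(1 - z ^ 2)
  set b := √(1 - y ^ 2)
  have y_le : |y| ≤ a := abs_le_sqrt (by linarith)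
  have z_le : |z| ≤ b := abs_le_sqrt (by linarith)
  have sq_sub_sq : |a - b| * (a + b) = |y + z| * |y - z| := by
    have ha : a ^ 2 = 1 - z ^ 2 := sq_sqrt (by linarith [sq_nonneg y])
    have hb : b ^ 2 = 1 - y ^ 2 := sq_sqrt (by linarith [sq_nonneg z])
    rw [← abs_of_nonneg (show 0 ≤ a + b by positivity), ← abs_mul, ← abs_mul]
    congr 1
    linear_combination ha - hb
  by_contra! hlt
  have sum_pos : 0 < a + b := ((abs_nonneg _).trans_lt hlt).trans_le <|
    (abs_sub a b).trans_eq (by simp [a, b, abs_of_nonneg])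
  have : |y - z| ≤ a + b := (abs_sub y z).trans (add_le_add y_le z_le)
  have := mul_le_mul_of_nonneg_left this (abs_nonneg (y + z))
  linarith [mul_lt_mul_of_pos_right hlt sum_pos]

theorem twoDiskSupport_add_neg {v : ℝ × ℝ} (hv : v.1 ^ 2 + v.2 ^ 2 ≤ 1) :
    twoDiskSupport v + twoDiskSupport (-v) =
      √(1 - v.2 ^ 2) + √(1 - v.1 ^ 2) + |v.1 + v.2| := by
  have := abs_le.1 (abs_sqrt_sub_sqrt_le_abs_add hv)
  simp only [twoDiskSupport, Prod.fst_neg, Prod.snd_neg, neg_sq]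
  rcases le_total 0 (v.1 + v.2) with h₀ | h₀
  · rw [abs_of_nonneg h₀] at this ⊢
    rw [max_eq_right (by linarith), max_eq_left (by linarith)]
    ring
  · rw [abs_of_nonpos h₀] at this ⊢
    rw [max_eq_left (by linarith), max_eq_right (by linarith)]
    ring

theorem hemisphereIntegral_twoDiskSupport :
    hemisphereIntegral twoDiskSupport = π * (√2 + π) / 2 := by
  have snd_term : hemisphereIntegral (fun v ↦ √(1 - v.2 ^ 2)) = π ^ 2 / 2 := by
    simpa using hemisphereIntegral_sqrt_one_sub_inner_sq (p := 0) (q := 1) (by norm_num)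
  have fst_term : hemisphereIntegral (fun v ↦ √(1 - v.1 ^ 2)) = π ^ 2 / 2 := by
    simpa using hemisphereIntegral_sqrt_one_sub_inner_sq (p := 1) (q := 0) (by norm_num)
  have width_integral :=
    calc hemisphereIntegral twoDiskSupport + hemisphereIntegral twoDiskSupport
      _ = hemisphereIntegral twoDiskSupport + hemisphereIntegral (fun v ↦ twoDiskSupport (-v)) := by
        rw [hemisphereIntegral_comp_neg]
      _ = hemisphereIntegral (fun v ↦ twoDiskSupport v + twoDiskSupport (-v)) :=
        (hemisphereIntegral_add (by fun_prop) (by fun_prop)).symm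
      _ = hemisphereIntegral (fun v ↦ √(1 - v.2 ^ 2) + √(1 - v.1 ^ 2) + |v.1 + v.2|) :=
        hemisphereIntegral_congr fun _ ↦ twoDiskSupport_add_neg
      _ = π ^ 2 / 2 + π ^ 2 / 2 + √2 * π := by
        rw [hemisphereIntegral_add (by fun_prop) (by fun_prop),
          hemisphereIntegral_add (by fun_prop) (by fun_prop), snd_term, fst_term,
          hemisphereIntegral_abs_add]
  linarith

theorem twoDiskSupport_spherical (θ : ℝ) {φ : ℝ} (hφ : φ ∈ Set.Icc 0 π) :
    twoDiskSupport (sin θ * sin φ, cos φ) =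
      max (sin φ - cos φ) (√(cos θ ^ 2 * sin φ ^ 2 + cos φ ^ 2) + sin θ * sin φ) := by
  have sqrt_eq_sin : √(1 - cos φ ^ 2) = sin φ := by
    rw [← sin_sq, sqrt_sq (sin_nonneg_of_mem_Icc hφ)]
  have one_sub_eq : 1 - (sin θ * sin φ) ^ 2 = cos θ ^ 2 * sin φ ^ 2 + cos φ ^ 2 := by
    linear_combination -sin φ ^ 2 * sin_sq_add_cos_sq θ - sin_sq_add_cos_sq φ
  simp only [twoDiskSupport, sqrt_eq_sin, one_sub_eq]

end TwoDiskSupport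

/-- the direct mean-width double integral for Example 2 equals π(√2 + π)/2. -/
theorem mean_width_example_two_direct :
    (∫ θ in (-(Real.pi / 2))..(Real.pi / 2), ∫ φ in (0 : ℝ)..Real.pi,
        max (Real.sin φ - Real.cos φ)
            (Real.sqrt (Real.cos θ ^ 2 * Real.sin φ ^ 2 + Real.cos φ ^ 2)
              + Real.sin θ * Real.sin φ) * Real.sin φ) =
      Real.pi * (Real.sqrt 2 + Real.pi) / 2 := by
  rw [← hemisphereIntegral_twoDiskSupport]
  refine intervalIntegral.integral_congr fun θ _ ↦ intervalIntegral.integral_congr fun φ hφ ↦ ?_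
  rw [Set.uIcc_of_le pi_pos.le] at hφ
  simp only [twoDiskSupport_spherical θ hφ]
end

section
/- The Lebesgue volume of the convex hull in ℝ³ of the union of the two unit disks D₁ = {(x,y,0) : x² + (y+1)² ≤ 1} and D₂ = {(0,y,z) : (y−1)² + z² ≤ 1} equals 2π/√3. -/
open Real MeasureTheory

/-!
The body is symmetric under `x ↦ -x`, under `z ↦ -z` and under `(x, y, z) ↦ (z, -y, x)`, so it
suffices to integrate the height `y` of its upper boundary over the part `x, z > 0` of its shadow in
the `(x, z)`-plane. There the upper boundary is a developable surface: each plane supporting both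
disks, with normal `(2 r, cos θ, 2 p)` where `r = √2 cos (θ / 2)` and `p = √2 sin (θ / 2)`, touches
each disk in one point, and the boundary contains the segment joining the two contact points. The
shadows of these segments have their endpoints on the two axes and, as `θ` increases from `0` to
`π / 2`, slide outwards and sweep out the triangle `x, z > 0`, `x + z < 1` injectively. Since the
height is affine along each segment, taking `θ` and the position on the segment as coordinates
leaves an elementary integral in `θ`.
-/

open Set

open scoped ENNReal

section Fubini

variable {α β : Type*} [MeasurableSpace α] [MeasurableSpace β] {μ : Measure α} {ν : Measure β}
  [SFinite ν] {s : Set (α × β)}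

lemma aemeasurable_measure_prodMk_left (hs : NullMeasurableSet s (μ.prod ν)) :
    AEMeasurable (fun x => ν (Prod.mk x ⁻¹' s)) μ := by
  obtain ⟨t, ht, hst⟩ := hs
  exact ⟨_, measurable_measure_prodMk_left ht,
    (Measure.ae_ae_of_ae_prod hst).mono fun _ hx => measure_congr hx⟩

lemma prod_apply_of_nullMeasurableSet (hs : NullMeasurableSet s (μ.prod ν)) :
    μ.prod ν s = ∫⁻ x, ν (Prod.mk x ⁻¹' s) ∂μ := by
  obtain ⟨t, ht, hst⟩ := hs
  rw [measure_congr hst, Measure.prod_apply ht]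
  exact lintegral_congr_ae <|
    (Measure.ae_ae_of_ae_prod hst).mono fun _ hx => (measure_congr hx).symm

end Fubini

section Even

variable {μ ν : Measure ℝ} [μ.IsNegInvariant] [NullSingletonClass μ]
  [ν.IsNegInvariant] [NullSingletonClass ν]

lemma lintegral_eq_two_mul_setLIntegral_Ioi_of_even {f : ℝ → ℝ≥0∞} (hf : ∀ x, f (-x) = f x) :
    ∫⁻ x, f x ∂μ = 2 * ∫⁻ x in Ioi 0, f x ∂μ := by
  have hreflect : ∫⁻ x in Iic 0, f x ∂μ = ∫⁻ x in Ioi 0, f x ∂μ := by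
    have := (Measure.measurePreserving_neg μ).setLIntegral_comp_preimage_emb
      (MeasurableEquiv.neg ℝ).measurableEmbedding f (Ioi 0)
    simpa [hf, setLIntegral_congr Iio_ae_eq_Iic] using this
  rw [← lintegral_add_compl f measurableSet_Ioi, compl_Ioi, hreflect, two_mul]

lemma lintegral_prod_eq_four_mul_setLIntegral_Ioi_of_even [SFinite μ] [SFinite ν]
    {f : ℝ × ℝ → ℝ≥0∞} (hf : AEMeasurable f (μ.prod ν)) (hf₁ : ∀ x y, f (-x, y) = f (x, y))
    (hf₂ : ∀ x y, f (x, -y) = f (x, y)) :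
    ∫⁻ p, f p ∂μ.prod ν = 4 * ∫⁻ p in Ioi 0 ×ˢ Ioi 0, f p ∂μ.prod ν := by
  calc ∫⁻ p, f p ∂μ.prod ν
      = ∫⁻ x, ∫⁻ y, f (x, y) ∂ν ∂μ := lintegral_prod f hf
    _ = 2 * ∫⁻ x, ∫⁻ y in Ioi 0, f (x, y) ∂ν ∂μ := by
        simp only [fun x => lintegral_eq_two_mul_setLIntegral_Ioi_of_even (μ := ν)
          (f := fun y => f (x, y)) (hf₂ x)]
        exact lintegral_const_mul' _ _ (by norm_num)
    _ = 2 * (2 * ∫⁻ x in Ioi 0, ∫⁻ y in Ioi 0, f (x, y) ∂ν ∂μ) := by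
        rw [lintegral_eq_two_mul_setLIntegral_Ioi_of_even fun x => by simp only [hf₁]]
    _ = 4 * ∫⁻ p in Ioi 0 ×ˢ Ioi 0, f p ∂μ.prod ν := by
        rw [← mul_assoc, setLIntegral_prod _ hf.restrict]
        norm_num

end Even

section OpenTriangle

/-- The open triangle with vertices `0`, `(l, 0)` and `(0, m)`, for `l` and `m` positive. -/
def openTriangle (l m : ℝ) : Set (ℝ × ℝ) :=
  {w | 0 < w.1 ∧ 0 < w.2 ∧ w.1 / l + w.2 / m < 1}

lemma isOpen_openTriangle (l m : ℝ) : IsOpen (openTriangle l m) :=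
  (isOpen_lt continuous_const continuous_fst).inter <|
    (isOpen_lt continuous_const continuous_snd).inter <|
      isOpen_lt (f := fun w : ℝ × ℝ => w.1 / l + w.2 / m) (by fun_prop) continuous_const

lemma swap_mem_openTriangle {l m : ℝ} {w : ℝ × ℝ} :
    w.swap ∈ openTriangle m l ↔ w ∈ openTriangle l m := by
  simp only [openTriangle, mem_ofPred_eq, Prod.fst_swap, Prod.snd_swap, add_comm (w.2 / m),
    and_left_comm]

lemma measurePreserving_swap_openTriangle (l m : ℝ) :
    MeasurePreserving Prod.swap (volume.restrict (openTriangle l m))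
      (volume.restrict (openTriangle m l)) := by
  have hpreimage : Prod.swap ⁻¹' openTriangle m l = openTriangle l m :=
    Set.ext fun _ => swap_mem_openTriangle
  have hswap : MeasurePreserving (Prod.swap : ℝ × ℝ → ℝ × ℝ) := Measure.measurePreserving_swap
  exact hpreimage ▸ hswap.restrict_preimage (isOpen_openTriangle m l).measurableSet

lemma volume_fst_add_snd_eq (c : ℝ) : volume {w : ℝ × ℝ | w.1 + w.2 = c} = 0 := by
  have hmeas : MeasurableSet {w : ℝ × ℝ | w.1 + w.2 = c} :=
    measurableSet_eq_fun (by fun_prop) measurable_const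
  rw [Measure.volume_eq_prod, Measure.measure_prod_null hmeas]
  refine .of_forall fun x => ?_
  have hfibre : Prod.mk x ⁻¹' {w : ℝ × ℝ | w.1 + w.2 = c} = {c - x} := by
    ext y
    exact eq_sub_iff_add_eq'.symm
  simp only [hfibre, Real.volume_singleton, Pi.zero_apply]

end OpenTriangle

section SlidingSegment

variable {a b a' b' : ℝ → ℝ} {t₀ t₁ : ℝ}

/-- The point dividing the segment from `(a t, 0)` to `(0, b t)` in the ratio `s : 1 - s`; the
argument is `(t, s)`. -/
def segmentPoint (a b : ℝ → ℝ) (p : ℝ × ℝ) : ℝ × ℝ :=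
  ((1 - p.2) * a p.1, p.2 * b p.1)

/-- The segment with endpoints `(a t, 0)` and `(0, b t)` slides away from the origin, with speeds
`a'` and `b'`, as `t` runs through `[t₀, t₁]`. It starts on the first axis, so that it sweeps out
the whole `openTriangle (a t₁) (b t₁)`. -/
structure IsSlidingSegment (a b a' b' : ℝ → ℝ) (t₀ t₁ : ℝ) : Prop where
  lt : t₀ < t₁
  hasDerivAt_fst : ∀ t ∈ Icc t₀ t₁, HasDerivAt a (a' t) t
  hasDerivAt_snd : ∀ t ∈ Icc t₀ t₁, HasDerivAt b (b' t) t
  deriv_fst_pos : ∀ t ∈ Ioo t₀ t₁, 0 < a' t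
  deriv_snd_pos : ∀ t ∈ Ioo t₀ t₁, 0 < b' t
  fst_start_pos : 0 < a t₀
  snd_start_eq_zero : b t₀ = 0

lemma integral_affine_mul_affine (A B α β : ℝ) :
    ∫ s in (0 : ℝ)..1, ((1 - s) * A + s * B) * ((1 - s) * α + s * β) =
      (A * (2 * α + β) + B * (α + 2 * β)) / 6 := by
  have hderiv (s : ℝ) : HasDerivAt
      (fun s => A * α * s + (A * (β - α) + (B - A) * α) / 2 * s ^ 2 +
        (B - A) * (β - α) / 3 * s ^ 3)
      (((1 - s) * A + s * B) * ((1 - s) * α + s * β)) s := by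
    refine ((((hasDerivAt_id' s).const_mul _).fun_add ((hasDerivAt_pow 2 s).const_mul _)).fun_add
      ((hasDerivAt_pow 3 s).const_mul _)).congr_deriv ?_
    push_cast
    ring
  rw [intervalIntegral.integral_eq_sub_of_hasDerivAt (fun s _ => hderiv s)
    (Continuous.intervalIntegrable (by fun_prop) _ _)]
  ring

lemma strictMonoOn_Icc_of_hasDerivAt_pos {f f' : ℝ → ℝ}
    (hf : ∀ t ∈ Icc t₀ t₁, HasDerivAt f (f' t) t) (hf' : ∀ t ∈ Ioo t₀ t₁, 0 < f' t) :
    StrictMonoOn f (Icc t₀ t₁) := by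
  refine strictMonoOn_of_hasDerivWithinAt_pos (convex_Icc t₀ t₁) (f' := f')
    (fun t ht => (hf t ht).continuousAt.continuousWithinAt)
    (fun t ht => (hf t (interior_subset ht)).hasDerivWithinAt) ?_
  rwa [interior_Icc]

namespace IsSlidingSegment

lemma continuousOn_fst (h : IsSlidingSegment a b a' b' t₀ t₁) : ContinuousOn a (Icc t₀ t₁) :=
  fun t ht => (h.hasDerivAt_fst t ht).continuousAt.continuousWithinAt

lemma continuousOn_snd (h : IsSlidingSegment a b a' b' t₀ t₁) : ContinuousOn b (Icc t₀ t₁) :=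
  fun t ht => (h.hasDerivAt_snd t ht).continuousAt.continuousWithinAt

lemma strictMonoOn_fst (h : IsSlidingSegment a b a' b' t₀ t₁) : StrictMonoOn a (Icc t₀ t₁) :=
  strictMonoOn_Icc_of_hasDerivAt_pos h.hasDerivAt_fst h.deriv_fst_pos

lemma strictMonoOn_snd (h : IsSlidingSegment a b a' b' t₀ t₁) : StrictMonoOn b (Icc t₀ t₁) :=
  strictMonoOn_Icc_of_hasDerivAt_pos h.hasDerivAt_snd h.deriv_snd_pos

lemma fst_pos (h : IsSlidingSegment a b a' b' t₀ t₁) {t : ℝ} (ht : t ∈ Icc t₀ t₁) : 0 < a t :=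
  h.fst_start_pos.trans_le (h.strictMonoOn_fst.monotoneOn (left_mem_Icc.2 h.lt.le) ht ht.1)

lemma snd_pos (h : IsSlidingSegment a b a' b' t₀ t₁) {t : ℝ} (ht : t ∈ Ioc t₀ t₁) : 0 < b t :=
  h.snd_start_eq_zero ▸
    h.strictMonoOn_snd (left_mem_Icc.2 h.lt.le) (Ioc_subset_Icc_self ht) ht.1

lemma injOn_segmentPoint (h : IsSlidingSegment a b a' b' t₀ t₁) :
    InjOn (segmentPoint a b) (Ioo t₀ t₁ ×ˢ Ioo 0 1) := by
  have not_lt : ∀ v ∈ Ioo t₀ t₁ ×ˢ Ioo (0 : ℝ) 1, ∀ w ∈ Ioo t₀ t₁ ×ˢ Ioo (0 : ℝ) 1,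
      segmentPoint a b v = segmentPoint a b w → ¬ v.1 < w.1 := by
    rintro ⟨t, s⟩ ⟨ht, hs⟩ ⟨t', s'⟩ ⟨ht', hs'⟩ heq hlt
    obtain ⟨heq₁, heq₂⟩ := Prod.mk.inj heq
    have ha := h.strictMonoOn_fst (Ioo_subset_Icc_self ht) (Ioo_subset_Icc_self ht') hlt
    have hb := h.strictMonoOn_snd (Ioo_subset_Icc_self ht) (Ioo_subset_Icc_self ht') hlt
    have ha₀ := h.fst_pos (Ioo_subset_Icc_self ht)
    have hb₀ := h.snd_pos (Ioo_subset_Ioc_self ht)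
    dsimp only at heq₁ heq₂ hs hs' hlt
    have hss' : s < s' := by
      by_contra! hle
      have : (1 - s) * a t < (1 - s') * a t' :=
        mul_lt_mul' (by linarith) ha ha₀.le (by linarith [hs'.2])
      exact this.ne heq₁
    have : s * b t < s' * b t' := mul_lt_mul hss' hb.le hb₀ hs'.1.le
    exact this.ne heq₂
  intro v hv w hw heq
  have htime : v.1 = w.1 :=
    le_antisymm (le_of_not_gt (not_lt w hw v hv heq.symm)) (le_of_not_gt (not_lt v hv w hw heq))
  refine Prod.ext htime (mul_right_cancel₀ (h.snd_pos (Ioo_subset_Ioc_self hv.1)).ne' ?_)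
  simpa [segmentPoint, htime] using congrArg Prod.snd heq

lemma mapsTo_segmentPoint (h : IsSlidingSegment a b a' b' t₀ t₁) :
    MapsTo (segmentPoint a b) (Ioo t₀ t₁ ×ˢ Ioo 0 1) (openTriangle (a t₁) (b t₁)) := by
  rintro ⟨t, s⟩ ⟨ht, hs₀, hs₁⟩
  have ht' := Ioo_subset_Icc_self ht
  have hend := right_mem_Icc.2 h.lt.le
  have ha := h.fst_pos ht'
  have hb := h.snd_pos (Ioo_subset_Ioc_self ht)
  have ha_lt : a t / a t₁ < 1 := (div_lt_one (h.fst_pos hend)).2 (h.strictMonoOn_fst ht' hend ht.2)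
  have hb_lt : b t / b t₁ < 1 :=
    (div_lt_one (h.snd_pos (right_mem_Ioc.2 h.lt))).2 (h.strictMonoOn_snd ht' hend ht.2)
  dsimp only at hs₀ hs₁
  refine ⟨mul_pos (sub_pos.2 hs₁) ha, mul_pos hs₀ hb, ?_⟩
  calc (1 - s) * a t / a t₁ + s * b t / b t₁
      = (1 - s) * (a t / a t₁) + s * (b t / b t₁) := by ring
    _ < (1 - s) * 1 + s * 1 := by gcongr
    _ = 1 := by ring

lemma exists_div_add_div_eq_one (h : IsSlidingSegment a b a' b' t₀ t₁) {w : ℝ × ℝ}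
    (hw : w ∈ openTriangle (a t₁) (b t₁)) :
    ∃ t ∈ Ioo t₀ t₁, w.1 / a t + w.2 / b t = 1 := by
  obtain ⟨-, hz, hxz⟩ := hw
  have ha₁ := h.fst_pos (right_mem_Icc.2 h.lt.le)
  have hb₁ := h.snd_pos (right_mem_Ioc.2 h.lt)
  have hcont : ContinuousOn (fun t => a t * b t - w.1 * b t - w.2 * a t) (Icc t₀ t₁) := by
    have := h.continuousOn_fst
    have := h.continuousOn_snd
    fun_prop
  have hstart : a t₀ * b t₀ - w.1 * b t₀ - w.2 * a t₀ < 0 := by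
    have := mul_pos hz h.fst_start_pos
    rw [h.snd_start_eq_zero]
    linarith
  have hend : 0 < a t₁ * b t₁ - w.1 * b t₁ - w.2 * a t₁ := by
    have := mul_pos (mul_pos ha₁ hb₁) (sub_pos.2 hxz)
    field_simp at this
    linarith
  obtain ⟨t, ht, hroot⟩ := intermediate_value_Ioo h.lt.le hcont ⟨hstart, hend⟩
  have ha := h.fst_pos (Ioo_subset_Icc_self ht)
  have hb := h.snd_pos (Ioo_subset_Ioc_self ht)
  refine ⟨t, ht, ?_⟩
  field_simp
  linarith

lemma image_segmentPoint (h : IsSlidingSegment a b a' b' t₀ t₁) :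
    segmentPoint a b '' (Ioo t₀ t₁ ×ˢ Ioo 0 1) = openTriangle (a t₁) (b t₁) := by
  refine h.mapsTo_segmentPoint.image_subset.antisymm fun w hw => ?_
  obtain ⟨t, ht, hsum⟩ := h.exists_div_add_div_eq_one hw
  have ha := h.fst_pos (Ioo_subset_Icc_self ht)
  have hb := h.snd_pos (Ioo_subset_Ioc_self ht)
  have hx : 0 < w.1 / a t := div_pos hw.1 ha
  have hz : 0 < w.2 / b t := div_pos hw.2.1 hb
  refine ⟨(t, w.2 / b t), ⟨ht, hz, by dsimp only; linarith⟩, Prod.ext ?_ ?_⟩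
  · rw [segmentPoint, ← hsum, add_sub_cancel_right, div_mul_cancel₀ _ ha.ne']
  · rw [segmentPoint, div_mul_cancel₀ _ hb.ne']

end IsSlidingSegment

/-- The Jacobian determinant of `segmentPoint a b` when `a` and `b` have derivatives `a'` and
`b'`. -/
def segmentJacobian (a b a' b' : ℝ → ℝ) (p : ℝ × ℝ) : ℝ :=
  (1 - p.2) * (a' p.1 * b p.1) + p.2 * (a p.1 * b' p.1)

/-- The Fréchet derivative of `segmentPoint a b`, as a matrix in the standard basis. -/
noncomputable def fderivSegmentPoint (a b a' b' : ℝ → ℝ) (p : ℝ × ℝ) : ℝ × ℝ →L[ℝ] ℝ × ℝ :=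
  (Matrix.toLin (.finTwoProd ℝ) (.finTwoProd ℝ)
    !![(1 - p.2) * a' p.1, -a p.1; p.2 * b' p.1, b p.1]).toContinuousLinearMap

lemma hasFDerivAt_segmentPoint {p : ℝ × ℝ} (ha : HasDerivAt a (a' p.1) p.1)
    (hb : HasDerivAt b (b' p.1) p.1) :
    HasFDerivAt (segmentPoint a b) (fderivSegmentPoint a b a' b' p) p := by
  unfold fderivSegmentPoint
  rw [Matrix.toLin_finTwoProd_toContinuousLinearMap]
  have hs : HasFDerivAt Prod.snd (ContinuousLinearMap.snd ℝ ℝ ℝ) p := hasFDerivAt_snd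
  convert! ((hs.const_sub 1).mul (ha.comp_hasFDerivAt p hasFDerivAt_fst)).prodMk
    (hs.mul (hb.comp_hasFDerivAt p hasFDerivAt_fst)) using 1
  ext <;> simp

lemma det_fderivSegmentPoint (p : ℝ × ℝ) :
    (fderivSegmentPoint a b a' b' p).det = segmentJacobian a b a' b' p := by
  simp only [fderivSegmentPoint, LinearMap.det_toContinuousLinearMap, LinearMap.det_toLin,
    Matrix.det_fin_two_of, segmentJacobian]
  ring

namespace IsSlidingSegment

variable {E : Type*} [NormedAddCommGroup E] [NormedSpace ℝ E]

lemma segmentJacobian_nonneg (h : IsSlidingSegment a b a' b' t₀ t₁) {p : ℝ × ℝ}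
    (hp : p ∈ Ioo t₀ t₁ ×ˢ Ioo 0 1) : 0 ≤ segmentJacobian a b a' b' p := by
  have ha := h.fst_pos (Ioo_subset_Icc_self hp.1)
  have hb := h.snd_pos (Ioo_subset_Ioc_self hp.1)
  have ha' := h.deriv_fst_pos _ hp.1
  have hb' := h.deriv_snd_pos _ hp.1
  have hs₀ : 0 ≤ p.2 := hp.2.1.le
  have hs₁ : 0 ≤ 1 - p.2 := sub_nonneg.2 hp.2.2.le
  unfold segmentJacobian
  positivity

lemma hasFDerivWithinAt_segmentPoint (h : IsSlidingSegment a b a' b' t₀ t₁) :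
    ∀ p ∈ Ioo t₀ t₁ ×ˢ Ioo 0 1, HasFDerivWithinAt (segmentPoint a b)
      (fderivSegmentPoint a b a' b' p) (Ioo t₀ t₁ ×ˢ Ioo 0 1) p := fun _ hp =>
  (hasFDerivAt_segmentPoint (h.hasDerivAt_fst _ (Ioo_subset_Icc_self hp.1))
    (h.hasDerivAt_snd _ (Ioo_subset_Icc_self hp.1))).hasFDerivWithinAt

lemma eqOn_abs_det_smul (h : IsSlidingSegment a b a' b' t₀ t₁) (g : ℝ × ℝ → E) :
    EqOn (fun p => |(fderivSegmentPoint a b a' b' p).det| • g p)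
      (fun p => segmentJacobian a b a' b' p • g p) (Ioo t₀ t₁ ×ˢ Ioo 0 1) := fun p hp => by
  simp only [det_fderivSegmentPoint, abs_of_nonneg (h.segmentJacobian_nonneg hp)]

lemma integrableOn_openTriangle_iff (h : IsSlidingSegment a b a' b' t₀ t₁) (f : ℝ × ℝ → E) :
    IntegrableOn f (openTriangle (a t₁) (b t₁)) ↔
      IntegrableOn (fun p => segmentJacobian a b a' b' p • f (segmentPoint a b p))
        (Ioo t₀ t₁ ×ˢ Ioo 0 1) := by
  have hmeas : MeasurableSet (Ioo t₀ t₁ ×ˢ Ioo (0 : ℝ) 1) :=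
    measurableSet_Ioo.prod measurableSet_Ioo
  rw [← h.image_segmentPoint, integrableOn_image_iff_integrableOn_abs_det_fderiv_smul _ hmeas
    h.hasFDerivWithinAt_segmentPoint h.injOn_segmentPoint,
    integrableOn_congr_fun (h.eqOn_abs_det_smul _) hmeas]

lemma setIntegral_openTriangle (h : IsSlidingSegment a b a' b' t₀ t₁) (f : ℝ × ℝ → E) :
    ∫ w in openTriangle (a t₁) (b t₁), f w =
      ∫ p in Ioo t₀ t₁ ×ˢ Ioo 0 1, segmentJacobian a b a' b' p • f (segmentPoint a b p) := by
  have hmeas : MeasurableSet (Ioo t₀ t₁ ×ˢ Ioo (0 : ℝ) 1) :=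
    measurableSet_Ioo.prod measurableSet_Ioo
  rw [← h.image_segmentPoint, integral_image_eq_integral_abs_det_fderiv_smul _ hmeas
    h.hasFDerivWithinAt_segmentPoint h.injOn_segmentPoint,
    setIntegral_congr_fun hmeas (h.eqOn_abs_det_smul _)]

variable {α β : ℝ → ℝ} {f : ℝ × ℝ → ℝ}

lemma integrableOn_segmentJacobian_mul_ruled (h : IsSlidingSegment a b a' b' t₀ t₁)
    (ha' : ContinuousOn a' (Icc t₀ t₁)) (hb' : ContinuousOn b' (Icc t₀ t₁))
    (hα : ContinuousOn α (Icc t₀ t₁)) (hβ : ContinuousOn β (Icc t₀ t₁)) :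
    IntegrableOn (fun p => segmentJacobian a b a' b' p * ((1 - p.2) * α p.1 + p.2 * β p.1))
      (Ioo t₀ t₁ ×ˢ Ioo 0 1) := by
  have comp_fst {g : ℝ → ℝ} (hg : ContinuousOn g (Icc t₀ t₁)) :
      ContinuousOn (fun p : ℝ × ℝ => g p.1) (Icc t₀ t₁ ×ˢ Icc 0 1) :=
    hg.comp _root_.continuousOn_fst fun _ hp => hp.1
  have hcont : ContinuousOn
      (fun p => segmentJacobian a b a' b' p * ((1 - p.2) * α p.1 + p.2 * β p.1))
      (Icc t₀ t₁ ×ˢ Icc 0 1) := by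
    have hs : ContinuousOn (fun p : ℝ × ℝ => p.2) (Icc t₀ t₁ ×ˢ Icc 0 1) :=
      _root_.continuousOn_snd
    have hs' := continuousOn_const (c := (1 : ℝ)).sub hs
    exact ((hs'.mul ((comp_fst ha').mul (comp_fst h.continuousOn_snd))).add
      (hs.mul ((comp_fst h.continuousOn_fst).mul (comp_fst hb')))).mul
        ((hs'.mul (comp_fst hα)).add (hs.mul (comp_fst hβ)))
  exact (hcont.integrableOn_compact (isCompact_Icc.prod isCompact_Icc)).mono_set
    (prod_mono Ioo_subset_Icc_self Ioo_subset_Icc_self)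

lemma integrableOn_openTriangle_of_ruled (h : IsSlidingSegment a b a' b' t₀ t₁)
    (ha' : ContinuousOn a' (Icc t₀ t₁)) (hb' : ContinuousOn b' (Icc t₀ t₁))
    (hα : ContinuousOn α (Icc t₀ t₁)) (hβ : ContinuousOn β (Icc t₀ t₁))
    (hf : ∀ p ∈ Ioo t₀ t₁ ×ˢ Ioo 0 1,
      f (segmentPoint a b p) = (1 - p.2) * α p.1 + p.2 * β p.1) :
    IntegrableOn f (openTriangle (a t₁) (b t₁)) := by
  rw [h.integrableOn_openTriangle_iff]
  refine (h.integrableOn_segmentJacobian_mul_ruled ha' hb' hα hβ).congr_fun (fun p hp => ?_)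
    (measurableSet_Ioo.prod measurableSet_Ioo)
  simp only [smul_eq_mul, hf p hp]

lemma setIntegral_openTriangle_of_ruled (h : IsSlidingSegment a b a' b' t₀ t₁)
    (ha' : ContinuousOn a' (Icc t₀ t₁)) (hb' : ContinuousOn b' (Icc t₀ t₁))
    (hα : ContinuousOn α (Icc t₀ t₁)) (hβ : ContinuousOn β (Icc t₀ t₁))
    (hf : ∀ p ∈ Ioo t₀ t₁ ×ˢ Ioo 0 1,
      f (segmentPoint a b p) = (1 - p.2) * α p.1 + p.2 * β p.1) :
    ∫ w in openTriangle (a t₁) (b t₁), f w =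
      ∫ t in t₀..t₁, (a' t * b t * (2 * α t + β t) + a t * b' t * (α t + 2 * β t)) / 6 := by
  have hint := h.integrableOn_segmentJacobian_mul_ruled ha' hb' hα hβ
  calc ∫ w in openTriangle (a t₁) (b t₁), f w
      = ∫ p in Ioo t₀ t₁ ×ˢ Ioo 0 1,
          segmentJacobian a b a' b' p * ((1 - p.2) * α p.1 + p.2 * β p.1) := by
        rw [h.setIntegral_openTriangle]
        refine setIntegral_congr_fun (measurableSet_Ioo.prod measurableSet_Ioo) fun p hp => ?_
        simp only [smul_eq_mul, hf p hp]
    _ = ∫ t in Ioo t₀ t₁, ∫ s in Ioo 0 1,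
          segmentJacobian a b a' b' (t, s) * ((1 - s) * α t + s * β t) := by
        rw [Measure.volume_eq_prod] at hint ⊢
        exact setIntegral_prod _ hint
    _ = ∫ t in t₀..t₁, ∫ s in (0 : ℝ)..1,
          segmentJacobian a b a' b' (t, s) * ((1 - s) * α t + s * β t) := by
        simp only [intervalIntegral.integral_of_le h.lt.le,
          intervalIntegral.integral_of_le zero_le_one, integral_Ioc_eq_integral_Ioo]
    _ = _ := by simp only [segmentJacobian, integral_affine_mul_affine]

end IsSlidingSegment

end SlidingSegment

section TrigonometricIntegrals

lemma add_mul_sin_sq_pos {a b : ℝ} (ha : 0 < a) (hb : 0 < b) (θ : ℝ) :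
    0 < a * cos θ ^ 2 + b * sin θ ^ 2 := by
  have := mul_le_mul_of_nonneg_right (min_le_left a b) (sq_nonneg (cos θ))
  have := mul_le_mul_of_nonneg_right (min_le_right a b) (sq_nonneg (sin θ))
  have : min a b * (cos θ ^ 2 + sin θ ^ 2) = min a b := by rw [cos_sq_add_sin_sq, mul_one]
  linarith [lt_min ha hb]

/- The antiderivative is the continuous branch of `arctan (b / a * tan θ)`, the argument of
`a * cos θ + b * sin θ * I`, written so that it has no pole at `π / 2`. -/
lemma hasDerivAt_add_arctan {a b : ℝ} (ha : 0 < a) (hb : 0 < b) (θ : ℝ) :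
    HasDerivAt
      (fun θ => θ + arctan ((b - a) * (sin θ * cos θ) / (a * cos θ ^ 2 + b * sin θ ^ 2)))
      (a * b / ((a * cos θ) ^ 2 + (b * sin θ) ^ 2)) θ := by
  have hden : a * cos θ ^ 2 + b * sin θ ^ 2 ≠ 0 := (add_mul_sin_sq_pos ha hb θ).ne'
  have hquad : (a * cos θ) ^ 2 + (b * sin θ) ^ 2 ≠ 0 := by
    simpa only [mul_pow] using (add_mul_sin_sq_pos (pow_pos ha 2) (pow_pos hb 2) θ).ne'
  have hnorm : (a * cos θ ^ 2 + b * sin θ ^ 2) ^ 2 + ((b - a) * (sin θ * cos θ)) ^ 2 =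
      (a * cos θ) ^ 2 + (b * sin θ) ^ 2 := by
    linear_combination ((a * cos θ) ^ 2 + (b * sin θ) ^ 2) * sin_sq_add_cos_sq θ
  have hquot : HasDerivAt
      (fun θ => (b - a) * (sin θ * cos θ) / (a * cos θ ^ 2 + b * sin θ ^ 2))
      ((b - a) * (a * cos θ ^ 2 - b * sin θ ^ 2) / (a * cos θ ^ 2 + b * sin θ ^ 2) ^ 2) θ := by
    refine ((((hasDerivAt_sin θ).fun_mul (hasDerivAt_cos θ)).const_mul (b - a)).fun_div
      ((((hasDerivAt_cos θ).fun_pow 2).const_mul a).fun_add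
        (((hasDerivAt_sin θ).fun_pow 2).const_mul b)) hden).congr_deriv ?_
    congr 1
    push_cast
    linear_combination (b - a) * (a * cos θ ^ 2 - b * sin θ ^ 2) * sin_sq_add_cos_sq θ
  refine ((hasDerivAt_id' θ).fun_add hquot.arctan).congr_deriv ?_
  have harctan : 1 + ((b - a) * (sin θ * cos θ) / (a * cos θ ^ 2 + b * sin θ ^ 2)) ^ 2 =
      ((a * cos θ) ^ 2 + (b * sin θ) ^ 2) / (a * cos θ ^ 2 + b * sin θ ^ 2) ^ 2 := by
    rw [← hnorm]
    field_simp
  rw [harctan, one_div_div, div_mul_div_cancel₀' (pow_ne_zero 2 hden), one_add_div hquad]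
  congr 1
  linear_combination a * b * sin_sq_add_cos_sq θ

lemma integral_one_div_mul_cos_sq_add_mul_sin_sq {a b : ℝ} (ha : 0 < a) (hb : 0 < b) :
    ∫ θ in (0 : ℝ)..π / 2, 1 / ((a * cos θ) ^ 2 + (b * sin θ) ^ 2) = π / (2 * (a * b)) := by
  have hcont : Continuous fun θ => a * b / ((a * cos θ) ^ 2 + (b * sin θ) ^ 2) :=
    Continuous.div (by fun_prop) (by fun_prop) fun θ => by
      simpa only [mul_pow] using (add_mul_sin_sq_pos (pow_pos ha 2) (pow_pos hb 2) θ).ne'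
  have hscaled : ∫ θ in (0 : ℝ)..π / 2, a * b / ((a * cos θ) ^ 2 + (b * sin θ) ^ 2) = π / 2 := by
    rw [intervalIntegral.integral_eq_sub_of_hasDerivAt
      (fun θ _ => hasDerivAt_add_arctan ha hb θ) (hcont.intervalIntegrable _ _)]
    simp
  simp only [div_eq_mul_one_div (a * b), intervalIntegral.integral_const_mul] at hscaled
  field_simp at hscaled ⊢
  linarith

lemma four_sub_cos_sq_pos (θ : ℝ) : 0 < 4 - cos θ ^ 2 := by
  linarith [cos_sq_le_one θ]

lemma integral_one_div_four_sub_cos_sq :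
    ∫ θ in (0 : ℝ)..π / 2, 1 / (4 - cos θ ^ 2) = π / (4 * √3) := by
  have hsum (θ : ℝ) : 4 - cos θ ^ 2 = (√3 * cos θ) ^ 2 + (2 * sin θ) ^ 2 := by
    rw [mul_pow, mul_pow, sin_sq, sq_sqrt (by norm_num)]
    ring
  simp only [hsum]
  rw [integral_one_div_mul_cos_sq_add_mul_sin_sq (by positivity) two_pos]
  ring

lemma hasDerivAt_sin_mul_cos_div_four_sub_cos_sq (θ : ℝ) :
    HasDerivAt (fun θ => sin θ * cos θ * (12 - cos θ ^ 2) / (3 * (4 - cos θ ^ 2) ^ 2))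
      (4 * cos θ ^ 2 * (4 + cos θ ^ 2) / (4 - cos θ ^ 2) ^ 3 - 1 / (4 - cos θ ^ 2)) θ := by
  have hpos : 4 - cos θ ^ 2 ≠ 0 := (four_sub_cos_sq_pos θ).ne'
  have hcos := (hasDerivAt_cos θ).fun_pow 2
  refine ((((hasDerivAt_sin θ).fun_mul (hasDerivAt_cos θ)).fun_mul (hcos.const_sub 12)).fun_div
    (((hcos.const_sub 4).fun_pow 2).const_mul 3)
    (mul_ne_zero three_ne_zero (pow_ne_zero 2 hpos))).congr_deriv ?_
  field_simp
  push_cast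
  linear_combination ((3 * cos θ ^ 2 - 12) * (4 - cos θ ^ 2) ^ 2 -
    4 * cos θ ^ 2 * (12 - cos θ ^ 2) * (4 - cos θ ^ 2)) * sin_sq θ

lemma integral_cos_sq_mul_div_four_sub_cos_sq_cube :
    ∫ θ in (0 : ℝ)..π / 2, 4 * cos θ ^ 2 * (4 + cos θ ^ 2) / (4 - cos θ ^ 2) ^ 3 =
      π / (4 * √3) := by
  have hcont₁ : Continuous fun θ => 4 * cos θ ^ 2 * (4 + cos θ ^ 2) / (4 - cos θ ^ 2) ^ 3 :=
    Continuous.div (by fun_prop) (by fun_prop) fun θ => (pow_pos (four_sub_cos_sq_pos θ) 3).ne'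
  have hcont₂ : Continuous fun θ => 1 / (4 - cos θ ^ 2) :=
    Continuous.div (by fun_prop) (by fun_prop) fun θ => (four_sub_cos_sq_pos θ).ne'
  rw [← integral_one_div_four_sub_cos_sq, ← sub_eq_zero, ← intervalIntegral.integral_sub
    (hcont₁.intervalIntegrable _ _) (hcont₂.intervalIntegrable _ _),
    intervalIntegral.integral_eq_sub_of_hasDerivAt
      (fun θ _ => hasDerivAt_sin_mul_cos_div_four_sub_cos_sq θ)
      ((hcont₁.sub hcont₂).intervalIntegrable _ _)]
  simp

end TrigonometricIntegrals

section ContactCurve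

/-- The `x`-coordinate of the point where the support plane with parameter `θ`, which is
`2 √2 cos (θ / 2) x + cos θ y + 2 √2 sin (θ / 2) z = 2`, touches `disk₁`. -/
noncomputable def contactX (θ : ℝ) : ℝ := 2 * √2 * cos (θ / 2) / (2 + cos θ)

/-- The `z`-coordinate of the point where the support plane with parameter `θ` touches `disk₂`. -/
noncomputable def contactZ (θ : ℝ) : ℝ := 2 * √2 * sin (θ / 2) / (2 - cos θ)

/-- The `y`-coordinate of the point where the support plane with parameter `θ` touches `disk₁`. -/
noncomputable def contactHeight₁ (θ : ℝ) : ℝ := -(2 / (2 + cos θ))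

/-- The `y`-coordinate of the point where the support plane with parameter `θ` touches `disk₂`. -/
noncomputable def contactHeight₂ (θ : ℝ) : ℝ := 2 / (2 - cos θ)

/-- The derivative of `contactX`. -/
noncomputable def derivContactX (θ : ℝ) : ℝ := √2 * sin (θ / 2) * cos θ / (2 + cos θ) ^ 2

/-- The derivative of `contactZ`. -/
noncomputable def derivContactZ (θ : ℝ) : ℝ := √2 * cos (θ / 2) * cos θ / (2 - cos θ) ^ 2

lemma two_add_cos_pos (θ : ℝ) : 0 < 2 + cos θ := by linarith [neg_one_le_cos θ]

lemma two_sub_cos_pos (θ : ℝ) : 0 < 2 - cos θ := by linarith [cos_le_one θ]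

lemma sqrt_two_mul_cos_half_sq (θ : ℝ) : (√2 * cos (θ / 2)) ^ 2 = 1 + cos θ := by
  rw [mul_pow, sq_sqrt zero_le_two, cos_sq, mul_div_cancel₀ θ two_ne_zero]
  ring

lemma sqrt_two_mul_sin_half_sq (θ : ℝ) : (√2 * sin (θ / 2)) ^ 2 = 1 - cos θ := by
  rw [mul_pow, sq_sqrt zero_le_two, sin_sq_eq_half_sub, mul_div_cancel₀ θ two_ne_zero]
  ring

lemma sqrt_two_mul_cos_half_mul_sqrt_two_mul_sin_half (θ : ℝ) :
    √2 * cos (θ / 2) * (√2 * sin (θ / 2)) = sin θ := by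
  have hdouble := sin_two_mul (θ / 2)
  rw [mul_div_cancel₀ θ two_ne_zero] at hdouble
  linear_combination sin (θ / 2) * cos (θ / 2) * sq_sqrt zero_le_two (x := (2 : ℝ)) - hdouble

lemma hasDerivAt_cos_half (θ : ℝ) :
    HasDerivAt (fun θ => 2 * √2 * cos (θ / 2)) (-(√2 * sin (θ / 2))) θ := by
  refine (((hasDerivAt_id' θ).div_const 2).cos.const_mul (2 * √2)).congr_deriv ?_
  ring

lemma hasDerivAt_sin_half (θ : ℝ) :
    HasDerivAt (fun θ => 2 * √2 * sin (θ / 2)) (√2 * cos (θ / 2)) θ := by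
  refine (((hasDerivAt_id' θ).div_const 2).sin.const_mul (2 * √2)).congr_deriv ?_
  ring

lemma hasDerivAt_contactX (θ : ℝ) : HasDerivAt contactX (derivContactX θ) θ := by
  refine ((hasDerivAt_cos_half θ).fun_div ((hasDerivAt_cos θ).const_add 2)
    (two_add_cos_pos θ).ne').congr_deriv ?_
  rw [derivContactX]
  congr 1
  rw [← sqrt_two_mul_cos_half_mul_sqrt_two_mul_sin_half θ]
  linear_combination 2 * √2 * sin (θ / 2) * sqrt_two_mul_cos_half_sq θ

lemma hasDerivAt_contactZ (θ : ℝ) : HasDerivAt contactZ (derivContactZ θ) θ := by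
  refine ((hasDerivAt_sin_half θ).fun_div ((hasDerivAt_cos θ).const_sub 2)
    (two_sub_cos_pos θ).ne').congr_deriv ?_
  rw [derivContactZ]
  congr 1
  rw [← sqrt_two_mul_cos_half_mul_sqrt_two_mul_sin_half θ]
  linear_combination -2 * √2 * cos (θ / 2) * sqrt_two_mul_sin_half_sq θ

lemma continuous_derivContactX : Continuous derivContactX :=
  Continuous.div (by fun_prop) (by fun_prop) fun θ => (pow_pos (two_add_cos_pos θ) 2).ne'

lemma continuous_derivContactZ : Continuous derivContactZ :=
  Continuous.div (by fun_prop) (by fun_prop) fun θ => (pow_pos (two_sub_cos_pos θ) 2).ne'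

lemma continuous_contactHeight₁ : Continuous contactHeight₁ :=
  (Continuous.div (by fun_prop) (by fun_prop) fun θ => (two_add_cos_pos θ).ne').neg

lemma continuous_contactHeight₂ : Continuous contactHeight₂ :=
  Continuous.div (by fun_prop) (by fun_prop) fun θ => (two_sub_cos_pos θ).ne'

lemma contactX_pi_div_two : contactX (π / 2) = 1 := by
  rw [contactX, div_div, show (2 : ℝ) * 2 = 4 by norm_num, cos_pi_div_four, cos_pi_div_two]
  linear_combination mul_self_sqrt zero_le_two (x := (2 : ℝ)) / 2

lemma contactZ_pi_div_two : contactZ (π / 2) = 1 := by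
  rw [contactZ, div_div, show (2 : ℝ) * 2 = 4 by norm_num, sin_pi_div_four, cos_pi_div_two]
  linear_combination mul_self_sqrt zero_le_two (x := (2 : ℝ)) / 2

lemma isSlidingSegment_contact :
    IsSlidingSegment contactX contactZ derivContactX derivContactZ 0 (π / 2) where
  lt := pi_div_two_pos
  hasDerivAt_fst θ _ := hasDerivAt_contactX θ
  hasDerivAt_snd θ _ := hasDerivAt_contactZ θ
  deriv_fst_pos θ hθ := by
    have := two_add_cos_pos θ
    have := cos_pos_of_mem_Ioo ⟨by linarith [hθ.1, pi_pos], hθ.2⟩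
    have := sin_pos_of_pos_of_lt_pi (half_pos hθ.1) (by linarith [hθ.2, pi_pos])
    unfold derivContactX
    positivity
  deriv_snd_pos θ hθ := by
    have := two_sub_cos_pos θ
    have := cos_pos_of_mem_Ioo ⟨by linarith [hθ.1, pi_pos], hθ.2⟩
    have := cos_pos_of_mem_Ioo (x := θ / 2) ⟨by linarith [hθ.1, pi_pos], by linarith [hθ.1, hθ.2]⟩
    unfold derivContactZ
    positivity
  fst_start_pos := by
    rw [contactX, zero_div, cos_zero]
    positivity
  snd_start_eq_zero := by rw [contactZ, zero_div, sin_zero, mul_zero, zero_div]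

lemma derivContactX_mul_contactZ (θ : ℝ) :
    derivContactX θ * contactZ θ =
      2 * (1 - cos θ) * cos θ / ((2 + cos θ) ^ 2 * (2 - cos θ)) := by
  rw [derivContactX, contactZ, div_mul_div_comm, ← sqrt_two_mul_sin_half_sq]
  ring

lemma contactX_mul_derivContactZ (θ : ℝ) :
    contactX θ * derivContactZ θ =
      2 * (1 + cos θ) * cos θ / ((2 + cos θ) * (2 - cos θ) ^ 2) := by
  rw [derivContactZ, contactX, div_mul_div_comm, ← sqrt_two_mul_cos_half_sq]
  ring

lemma contact_ruled_integrand (θ : ℝ) :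
    (derivContactX θ * contactZ θ * (2 * contactHeight₁ θ + contactHeight₂ θ) +
      contactX θ * derivContactZ θ * (contactHeight₁ θ + 2 * contactHeight₂ θ)) / 6 =
      4 * cos θ ^ 2 * (4 + cos θ ^ 2) / (4 - cos θ ^ 2) ^ 3 := by
  have hadd := (two_add_cos_pos θ).ne'
  have hsub := (two_sub_cos_pos θ).ne'
  have hfactor : 4 - cos θ ^ 2 = (2 + cos θ) * (2 - cos θ) := by ring
  rw [derivContactX_mul_contactZ, contactX_mul_derivContactZ, contactHeight₁, contactHeight₂,
    hfactor]
  field_simp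
  ring

lemma contactX_sq_add_sq (θ : ℝ) : contactX θ ^ 2 + (contactHeight₁ θ + 1) ^ 2 = 1 := by
  have := (two_add_cos_pos θ).ne'
  rw [contactX, contactHeight₁]
  field_simp
  linear_combination 4 * sqrt_two_mul_cos_half_sq θ

lemma sq_add_contactZ_sq (θ : ℝ) : (contactHeight₂ θ - 1) ^ 2 + contactZ θ ^ 2 = 1 := by
  have := (two_sub_cos_pos θ).ne'
  rw [contactZ, contactHeight₂]
  field_simp
  linear_combination 4 * sqrt_two_mul_sin_half_sq θ

lemma support_contactPoint₁ (θ : ℝ) :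
    2 * (√2 * cos (θ / 2)) * contactX θ + cos θ * contactHeight₁ θ = 2 := by
  have := (two_add_cos_pos θ).ne'
  rw [contactX, contactHeight₁]
  field_simp
  linear_combination 2 * sqrt_two_mul_cos_half_sq θ

lemma support_contactPoint₂ (θ : ℝ) :
    cos θ * contactHeight₂ θ + 2 * (√2 * sin (θ / 2)) * contactZ θ = 2 := by
  have := (two_sub_cos_pos θ).ne'
  rw [contactZ, contactHeight₂]
  field_simp
  linear_combination 2 * sqrt_two_mul_sin_half_sq θ

end ContactCurve

section ConvexHull

variable {𝕜 E F : Type*} [Semiring 𝕜] [PartialOrder 𝕜] [AddCommMonoid E] [Module 𝕜 E]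
  [AddCommMonoid F] [Module 𝕜 F] {s : Set E} {t : Set F}

lemma mapsTo_convexHull (f : E →ₗ[𝕜] F) (h : MapsTo f s t) :
    MapsTo f (convexHull 𝕜 s) (convexHull 𝕜 t) := by
  rw [mapsTo_iff_image_subset, f.image_convexHull]
  exact convexHull_mono h.image_subset

end ConvexHull

section Slice

/-- The section of `S` by the line parallel to the `y`-axis through `(w.1, 0, w.2)`. -/
def slice (S : Set (EuclideanSpace ℝ (Fin 3))) (w : ℝ × ℝ) : Set ℝ :=
  {y | !₂[w.1, y, w.2] ∈ S}

lemma convex_slice {S : Set (EuclideanSpace ℝ (Fin 3))} (hS : Convex ℝ S) (w : ℝ × ℝ) :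
    Convex ℝ (slice S w) := by
  intro y hy y' hy' c c' hc hc' hsum
  have hmem := hS hy hy' hc hc' hsum
  have hcomb : c • !₂[w.1, y, w.2] + c' • !₂[w.1, y', w.2] =
      !₂[w.1, c • y + c' • y', w.2] := by
    ext i
    fin_cases i <;> simp [← add_mul, hsum]
  rwa [hcomb] at hmem

lemma measurePreserving_slice :
    MeasurePreserving fun q : (ℝ × ℝ) × ℝ =>
      (!₂[q.1.1, q.2, q.1.2] : EuclideanSpace ℝ (Fin 3)) := by
  have hpair : MeasurePreserving
      (Prod.map (MeasurableEquiv.finTwoArrow (α := ℝ)).symm (id : ℝ → ℝ)) :=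
    (volume_preserving_finTwoArrow ℝ).symm.prod (.id (volume : Measure ℝ))
  have hinsert := (volume_preserving_piFinSuccAbove (fun _ : Fin 3 => ℝ) 1).symm
  convert! (PiLp.volume_preserving_toLp (Fin 3)).comp <|
    hinsert.comp <| Measure.measurePreserving_swap.comp hpair using 1
  ext q i
  fin_cases i <;> rfl

variable {S : Set (EuclideanSpace ℝ (Fin 3))}

lemma aemeasurable_volume_slice (hS : NullMeasurableSet S) :
    AEMeasurable fun w => volume (slice S w) :=
  aemeasurable_measure_prodMk_left <|
    hS.preimage measurePreserving_slice.quasiMeasurePreserving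

lemma volume_eq_lintegral_volume_slice (hS : NullMeasurableSet S) :
    volume S = ∫⁻ w, volume (slice S w) := by
  rw [← measurePreserving_slice.measure_preimage hS]
  exact prod_apply_of_nullMeasurableSet <|
    hS.preimage measurePreserving_slice.quasiMeasurePreserving

end Slice

section DiskHull

lemma mul_add_mul_le_of_sq_add_sq_le {a b c x y : ℝ} (hc : 0 < c) (hab : a ^ 2 + b ^ 2 ≤ c ^ 2)
    (hxy : x ^ 2 + y ^ 2 ≤ 1) : a * x + b * y ≤ c := by
  have := mul_le_mul_of_nonneg_left hxy (sq_nonneg c)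
  have : 2 * c * (a * x + b * y) ≤ 2 * c * c := by
    linarith [sq_nonneg (a - c * x), sq_nonneg (b - c * y)]
  exact le_of_mul_le_mul_left this (by positivity)

/-- The unit disk centred at `(0, -1, 0)` in the plane `z = 0`. -/
def disk₁ : Set (EuclideanSpace ℝ (Fin 3)) := {p | p 0 ^ 2 + (p 1 + 1) ^ 2 ≤ 1 ∧ p 2 = 0}

/-- The unit disk centred at `(0, 1, 0)` in the plane `x = 0`. -/
def disk₂ : Set (EuclideanSpace ℝ (Fin 3)) := {p | (p 1 - 1) ^ 2 + p 2 ^ 2 ≤ 1 ∧ p 0 = 0}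

/-- The convex body whose volume is computed. -/
def diskHull : Set (EuclideanSpace ℝ (Fin 3)) := convexHull ℝ (disk₁ ∪ disk₂)

lemma convex_diskHull : Convex ℝ diskHull := convex_convexHull ℝ _

lemma mapsTo_diskHull {f : EuclideanSpace ℝ (Fin 3) →ₗ[ℝ] EuclideanSpace ℝ (Fin 3)}
    (hf : MapsTo f (disk₁ ∪ disk₂) (disk₁ ∪ disk₂)) : MapsTo f diskHull diskHull :=
  mapsTo_convexHull f hf

/-- The reflection `(x, y, z) ↦ (-x, y, z)`. -/
noncomputable def reflectX : EuclideanSpace ℝ (Fin 3) →ₗ[ℝ] EuclideanSpace ℝ (Fin 3) :=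
  Matrix.toLpLin 2 2 !![-1, 0, 0; 0, 1, 0; 0, 0, 1]

/-- The isometry `(x, y, z) ↦ (z, -y, x)`, which exchanges `disk₁` and `disk₂`. -/
noncomputable def swapXZ : EuclideanSpace ℝ (Fin 3) →ₗ[ℝ] EuclideanSpace ℝ (Fin 3) :=
  Matrix.toLpLin 2 2 !![0, 0, 1; 0, -1, 0; 1, 0, 0]

lemma reflectX_apply (p : EuclideanSpace ℝ (Fin 3)) : reflectX p = !₂[-p 0, p 1, p 2] := by
  ext i
  fin_cases i <;> simp [reflectX, Matrix.toLpLin_apply, dotProduct, Fin.sum_univ_three]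

lemma swapXZ_apply (p : EuclideanSpace ℝ (Fin 3)) : swapXZ p = !₂[p 2, -p 1, p 0] := by
  ext i
  fin_cases i <;> simp [swapXZ, Matrix.toLpLin_apply, dotProduct, Fin.sum_univ_three]

lemma reflectX_mapsTo_diskHull : MapsTo reflectX diskHull diskHull := by
  refine mapsTo_diskHull fun p hp => hp.imp ?_ ?_ <;>
    simp +contextual [reflectX_apply, disk₁, disk₂]

lemma swapXZ_mapsTo_diskHull : MapsTo swapXZ diskHull diskHull := by
  refine mapsTo_diskHull fun p hp => swapXZ_apply p ▸ hp.symm.imp ?_ ?_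
  · rintro ⟨hdisk, hx⟩
    refine ⟨?_, hx⟩
    calc p 2 ^ 2 + (-p 1 + 1) ^ 2 = (p 1 - 1) ^ 2 + p 2 ^ 2 := by ring
      _ ≤ 1 := hdisk
  · rintro ⟨hdisk, hz⟩
    refine ⟨?_, hz⟩
    calc (-p 1 - 1) ^ 2 + p 0 ^ 2 = p 0 ^ 2 + (p 1 + 1) ^ 2 := by ring
      _ ≤ 1 := hdisk

lemma slice_diskHull_neg_fst (x z : ℝ) : slice diskHull (-x, z) = slice diskHull (x, z) := by
  have hsubset (x : ℝ) : slice diskHull (x, z) ⊆ slice diskHull (-x, z) := fun y hy => by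
    simpa [slice, reflectX_apply] using reflectX_mapsTo_diskHull hy
  exact (neg_neg x ▸ hsubset (-x)).antisymm (hsubset x)

lemma slice_diskHull_swap (w : ℝ × ℝ) : slice diskHull w.swap = -slice diskHull w := by
  have hsubset (w : ℝ × ℝ) : slice diskHull w ⊆ -slice diskHull w.swap := fun y hy => by
    simpa [slice, swapXZ_apply] using swapXZ_mapsTo_diskHull hy
  exact (hsubset w.swap).antisymm (neg_subset.2 (hsubset w))

lemma slice_diskHull_neg_snd (x z : ℝ) : slice diskHull (x, -z) = slice diskHull (x, z) := by
  rw [← Prod.swap_prod_mk, slice_diskHull_swap, slice_diskHull_neg_fst, ← slice_diskHull_swap,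
    Prod.swap_prod_mk]

lemma support_diskHull (θ : ℝ) {p : EuclideanSpace ℝ (Fin 3)} (hp : p ∈ diskHull) :
    2 * (√2 * cos (θ / 2)) * p 0 + cos θ * p 1 + 2 * (√2 * sin (θ / 2)) * p 2 ≤ 2 := by
  have hlinear : IsLinearMap ℝ fun p : EuclideanSpace ℝ (Fin 3) =>
      2 * (√2 * cos (θ / 2)) * p 0 + cos θ * p 1 + 2 * (√2 * sin (θ / 2)) * p 2 := by
    constructor <;> intros <;> simp only [PiLp.add_apply, PiLp.smul_apply, smul_eq_mul] <;> ring
  refine convexHull_min (fun p hp => ?_) (convex_halfSpace_le hlinear 2) hp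
  change 2 * (√2 * cos (θ / 2)) * p 0 + cos θ * p 1 + 2 * (√2 * sin (θ / 2)) * p 2 ≤ 2
  rcases hp with ⟨hdisk, hz⟩ | ⟨hdisk, hx⟩
  · have hnorm : (2 * (√2 * cos (θ / 2))) ^ 2 + cos θ ^ 2 ≤ (2 + cos θ) ^ 2 := by
      linarith [sqrt_two_mul_cos_half_sq θ]
    have := mul_add_mul_le_of_sq_add_sq_le (two_add_cos_pos θ) hnorm hdisk
    rw [hz]
    linarith
  · have hnorm : cos θ ^ 2 + (2 * (√2 * sin (θ / 2))) ^ 2 ≤ (2 - cos θ) ^ 2 := by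
      linarith [sqrt_two_mul_sin_half_sq θ]
    have := mul_add_mul_le_of_sq_add_sq_le (two_sub_cos_pos θ) hnorm hdisk
    rw [hx]
    linarith

lemma slice_diskHull_eq_empty {w : ℝ × ℝ} (hw : 1 < w.1 + w.2) : slice diskHull w = ∅ := by
  refine eq_empty_of_forall_notMem fun y hy => ?_
  have hsupport : 2 * (√2 * cos (π / 2 / 2)) * w.1 + cos (π / 2) * y +
      2 * (√2 * sin (π / 2 / 2)) * w.2 ≤ 2 := support_diskHull (π / 2) hy
  rw [div_div, show (2 : ℝ) * 2 = 4 by norm_num, cos_pi_div_four, sin_pi_div_four,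
    cos_pi_div_two] at hsupport
  have hsum : w.1 + w.2 ≤ 1 := by
    linear_combination hsupport / 2 - (w.1 + w.2) / 2 * mul_self_sqrt zero_le_two (x := (2 : ℝ))
  exact hsum.not_gt hw

lemma contactPoint₁_mem_diskHull (θ : ℝ) : !₂[contactX θ, contactHeight₁ θ, 0] ∈ diskHull :=
  subset_convexHull ℝ _ <| .inl ⟨(contactX_sq_add_sq θ).le, rfl⟩

lemma contactPoint₂_mem_diskHull (θ : ℝ) : !₂[0, contactHeight₂ θ, contactZ θ] ∈ diskHull :=
  subset_convexHull ℝ _ <| .inr ⟨(sq_add_contactZ_sq θ).le, rfl⟩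

lemma isGreatest_slice_segmentPoint {p : ℝ × ℝ} (hp : p ∈ Ioo 0 (π / 2) ×ˢ Ioo 0 1) :
    IsGreatest (slice diskHull (segmentPoint contactX contactZ p))
      ((1 - p.2) * contactHeight₁ p.1 + p.2 * contactHeight₂ p.1) := by
  obtain ⟨θ, s⟩ := p
  obtain ⟨hθ, hs⟩ := hp
  dsimp only at hθ hs
  constructor
  · have hmem := convex_diskHull (contactPoint₁_mem_diskHull θ) (contactPoint₂_mem_diskHull θ)
      (sub_nonneg.2 hs.2.le) hs.1.le (sub_add_cancel 1 s)
    have hcomb : (1 - s) • !₂[contactX θ, contactHeight₁ θ, 0] +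
        s • !₂[0, contactHeight₂ θ, contactZ θ] =
        !₂[(1 - s) * contactX θ, (1 - s) * contactHeight₁ θ + s * contactHeight₂ θ,
          s * contactZ θ] := by
      ext i
      fin_cases i <;> simp
    rwa [hcomb] at hmem
  · intro y hy
    have hcos : 0 < cos θ := cos_pos_of_mem_Ioo ⟨by linarith [hθ.1, pi_pos], hθ.2⟩
    have hsupport : 2 * (√2 * cos (θ / 2)) * ((1 - s) * contactX θ) + cos θ * y +
        2 * (√2 * sin (θ / 2)) * (s * contactZ θ) ≤ 2 := support_diskHull θ hy
    refine le_of_mul_le_mul_left ?_ hcos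
    linear_combination hsupport - (1 - s) * support_contactPoint₁ θ - s * support_contactPoint₂ θ

/-- The height of the upper boundary of `diskHull`, as a graph over the `(x, z)`-plane. Outside the
projection of `diskHull` it has the junk value `0`. -/
noncomputable def topHeight (w : ℝ × ℝ) : ℝ := sSup (slice diskHull w)

lemma topHeight_segmentPoint {p : ℝ × ℝ} (hp : p ∈ Ioo 0 (π / 2) ×ˢ Ioo 0 1) :
    topHeight (segmentPoint contactX contactZ p) =
      (1 - p.2) * contactHeight₁ p.1 + p.2 * contactHeight₂ p.1 :=
  (isGreatest_slice_segmentPoint hp).csSup_eq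

lemma isGreatest_topHeight {w : ℝ × ℝ} (hw : w ∈ openTriangle 1 1) :
    IsGreatest (slice diskHull w) (topHeight w) := by
  have himage := isSlidingSegment_contact.image_segmentPoint
  rw [contactX_pi_div_two, contactZ_pi_div_two] at himage
  obtain ⟨p, hp, rfl⟩ := himage ▸ hw
  exact topHeight_segmentPoint hp ▸ isGreatest_slice_segmentPoint hp

lemma isLeast_neg_topHeight_swap {w : ℝ × ℝ} (hw : w ∈ openTriangle 1 1) :
    IsLeast (slice diskHull w) (-topHeight w.swap) := by
  have hgreatest := isGreatest_topHeight (swap_mem_openTriangle.2 hw)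
  rw [slice_diskHull_swap] at hgreatest
  exact ⟨hgreatest.1, fun y hy => neg_le.1 (hgreatest.2 (neg_mem_neg.2 hy))⟩

lemma slice_diskHull_eq_Icc {w : ℝ × ℝ} (hw : w ∈ openTriangle 1 1) :
    slice diskHull w = Icc (-topHeight w.swap) (topHeight w) := by
  have hgreatest := isGreatest_topHeight hw
  have hleast := isLeast_neg_topHeight_swap hw
  exact Subset.antisymm (fun y hy => ⟨hleast.2 hy, hgreatest.2 hy⟩) <|
    (convex_slice convex_diskHull w).ordConnected.out hleast.1 hgreatest.1

lemma topHeight_add_topHeight_swap_nonneg {w : ℝ × ℝ} (hw : w ∈ openTriangle 1 1) :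
    0 ≤ topHeight w + topHeight w.swap := by
  linarith [(isLeast_neg_topHeight_swap hw).2 (isGreatest_topHeight hw).1]

lemma volume_slice_diskHull {w : ℝ × ℝ} (hw : w ∈ openTriangle 1 1) :
    volume (slice diskHull w) = ENNReal.ofReal (topHeight w + topHeight w.swap) := by
  rw [slice_diskHull_eq_Icc hw, Real.volume_Icc, sub_neg_eq_add]

end DiskHull

section Volume

lemma integrableOn_topHeight : IntegrableOn topHeight (openTriangle 1 1) := by
  have hintegrable := isSlidingSegment_contact.integrableOn_openTriangle_of_ruled
    continuous_derivContactX.continuousOn continuous_derivContactZ.continuousOn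
    continuous_contactHeight₁.continuousOn continuous_contactHeight₂.continuousOn
    fun _ hp => topHeight_segmentPoint hp
  rwa [contactX_pi_div_two, contactZ_pi_div_two] at hintegrable

lemma setIntegral_topHeight : ∫ w in openTriangle 1 1, topHeight w = π / (4 * √3) := by
  have hruled := isSlidingSegment_contact.setIntegral_openTriangle_of_ruled
    continuous_derivContactX.continuousOn continuous_derivContactZ.continuousOn
    continuous_contactHeight₁.continuousOn continuous_contactHeight₂.continuousOn
    fun _ hp => topHeight_segmentPoint hp
  simp only [contactX_pi_div_two, contactZ_pi_div_two, contact_ruled_integrand,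
    integral_cos_sq_mul_div_four_sub_cos_sq_cube] at hruled
  exact hruled

lemma setLIntegral_Ioi_volume_slice_diskHull :
    ∫⁻ w in Ioi (0 : ℝ) ×ˢ Ioi (0 : ℝ), volume (slice diskHull w) =
      ∫⁻ w in openTriangle 1 1, volume (slice diskHull w) := by
  rw [← lintegral_indicator (measurableSet_Ioi.prod measurableSet_Ioi),
    ← lintegral_indicator (isOpen_openTriangle 1 1).measurableSet]
  have hline : ∀ᵐ w : ℝ × ℝ, w.1 + w.2 ≠ 1 := measure_eq_zero_iff_ae_notMem.1 <|
    volume_fst_add_snd_eq 1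
  refine lintegral_congr_ae (hline.mono fun w hw => ?_)
  rcases hw.lt_or_gt with hlt | hgt
  · simp [indicator, openTriangle, hlt]
  · simp [indicator, slice_diskHull_eq_empty hgt]

lemma setLIntegral_openTriangle_volume_slice_diskHull :
    ∫⁻ w in openTriangle 1 1, volume (slice diskHull w) = ENNReal.ofReal (π / (2 * √3)) := by
  have hmeas := (isOpen_openTriangle 1 1).measurableSet
  have hswap := measurePreserving_swap_openTriangle 1 1
  have hemb : MeasurableEmbedding (Prod.swap : ℝ × ℝ → ℝ × ℝ) :=
    MeasurableEquiv.prodComm.measurableEmbedding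
  have hint : IntegrableOn (fun w => topHeight w.swap) (openTriangle 1 1) :=
    (hswap.integrable_comp_emb hemb).2 integrableOn_topHeight
  calc ∫⁻ w in openTriangle 1 1, volume (slice diskHull w)
      = ∫⁻ w in openTriangle 1 1, ENNReal.ofReal (topHeight w + topHeight w.swap) :=
        setLIntegral_congr_fun hmeas fun _ hw => volume_slice_diskHull hw
    _ = ENNReal.ofReal (∫ w in openTriangle 1 1, (topHeight w + topHeight w.swap)) := by
        refine (ofReal_integral_eq_lintegral_ofReal (integrableOn_topHeight.add hint) ?_).symm
        exact (ae_restrict_mem hmeas).mono fun _ hw => topHeight_add_topHeight_swap_nonneg hw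
    _ = ENNReal.ofReal (π / (2 * √3)) := by
        rw [integral_add integrableOn_topHeight hint, hswap.integral_comp hemb,
          setIntegral_topHeight]
        congr 1
        ring

end Volume

/-- The Lebesgue volume of the convex hull in ℝ³ of the union of the two
unit disks D₁ = {(x,y,0) : x² + (y+1)² ≤ 1} and D₂ = {(0,y,z) : (y−1)² + z² ≤ 1}
equals 2π/√3. -/
theorem volume_convexHull_example_three :
    volume (convexHull ℝ
      ({p : EuclideanSpace ℝ (Fin 3) | (p 0) ^ 2 + (p 1 + 1) ^ 2 ≤ 1 ∧ p 2 = 0} ∪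
       {p : EuclideanSpace ℝ (Fin 3) | (p 1 - 1) ^ 2 + (p 2) ^ 2 ≤ 1 ∧ p 0 = 0})) =
    ENNReal.ofReal (2 * Real.pi / Real.sqrt 3) := by
  have hnull : NullMeasurableSet diskHull := convex_diskHull.nullMeasurableSet volume
  calc volume diskHull
      = ∫⁻ w, volume (slice diskHull w) := volume_eq_lintegral_volume_slice hnull
    _ = 4 * ∫⁻ w in Ioi 0 ×ˢ Ioi 0, volume (slice diskHull w) :=
        lintegral_prod_eq_four_mul_setLIntegral_Ioi_of_even (aemeasurable_volume_slice hnull)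
          (fun x z => by rw [slice_diskHull_neg_fst]) (fun x z => by rw [slice_diskHull_neg_snd])
    _ = 4 * ENNReal.ofReal (π / (2 * √3)) := by
        rw [setLIntegral_Ioi_volume_slice_diskHull, setLIntegral_openTriangle_volume_slice_diskHull]
    _ = ENNReal.ofReal (2 * π / √3) := by
        rw [← ENNReal.ofReal_ofNat 4, ← ENNReal.ofReal_mul (by norm_num)]
        congr 1
        ring
end

section
/- Every point of Vinzant's parametrized surface x = u√(−v(2+v)), y = v(1 + 2uv)/(1 + 2v), z = (−1 + u)√(v(2+3v))/(1 + 2v), for 0 ≤ u ≤ 1 and −2 ≤ v ≤ −2/3, satisfies the sextic equation 0 = −4x⁴ + 8x⁶ − 16x²y + 36x⁴y − 16y² + 40x²y² + 15x⁴y² + 36x²y³ + 8y⁴ + 6x²y⁴ − y⁶ − 8x²z² + 24x⁴z² + 16yz² + 40y²z² − 78x²y²z² − 36y³z² + 6y⁴z² − 4z⁴ + 24x²z⁴ − 36yz⁴ + 15y²z⁴ + 8z⁶. -/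
open Real

/-!
The surface is ruled: `(x, y, z)` divides, in the ratio `1 - u : u`, the segment from `(s, v, 0)` on
the first circle to `(0, w, t)` on the second, where `w = v / (1 + 2 * v)`. The relation
`v - w = 2 * v * w` says that the tangent lines at the two endpoints meet on the `y`-axis, so that
they span a common tangent plane.

The planes `α x + β y + γ z = h` tangent to both circles are the common zeros of the dual quadrics
`α² - h² - 2 h β` and `γ² - h² + 2 h β`. A point lies on the surface dual to this family when the
pencil of quadrics, inverted and evaluated at the point, has a double root in the pencil parameter.
After removing extraneous factors this is a double root of a monic cubic with discriminant `-4`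
times the sextic; along the segment the double root is `(1 - u) * w - u * v`.
-/

section CommRing

variable {R : Type*} [CommRing R]

open Polynomial in
theorem cubic_discr_eq_zero_of_double_root {P : Cubic R} {k a b : R}
    (h : P.toPoly = C k * (X - C a) * (X - C a) * (X - C b)) : P.discr = 0 := by
  rw [Cubic.C_mul_prod_X_sub_C_eq] at h
  rw [(Cubic.toPoly_injective _ _).mp h, Cubic.discr]
  ring

/-- Vinzant's sextic, whose zero locus contains the curved boundary of the convex hull of the two
disks. -/
def vinzantSextic (x y z : R) : R :=
  -4 * x ^ 4 + 8 * x ^ 6 - 16 * x ^ 2 * y + 36 * x ^ 4 * y - 16 * y ^ 2 + 40 * x ^ 2 * y ^ 2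
    + 15 * x ^ 4 * y ^ 2 + 36 * x ^ 2 * y ^ 3 + 8 * y ^ 4 + 6 * x ^ 2 * y ^ 4 - y ^ 6
    - 8 * x ^ 2 * z ^ 2 + 24 * x ^ 4 * z ^ 2 + 16 * y * z ^ 2 + 40 * y ^ 2 * z ^ 2
    - 78 * x ^ 2 * y ^ 2 * z ^ 2 - 36 * y ^ 3 * z ^ 2 + 6 * y ^ 4 * z ^ 2 - 4 * z ^ 4
    + 24 * x ^ 2 * z ^ 4 - 36 * y * z ^ 4 + 15 * y ^ 2 * z ^ 4 + 8 * z ^ 6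

/-- The cubic attached to `(x, y, z)` by the pencil of dual quadrics of the two circles. If
`[σ : τ]` is the pencil parameter, the variable of the cubic is `y * (σ + τ) / (τ - σ)`. -/
def dualPencilCubic (x y z : R) : Cubic R :=
  ⟨1, -2, 2 * (x ^ 2 + z ^ 2) - y ^ 2, 2 * y * (x ^ 2 - z ^ 2 + y)⟩

theorem discr_dualPencilCubic (x y z : R) :
    (dualPencilCubic x y z).discr = -4 * vinzantSextic x y z := by
  simp only [Cubic.discr, dualPencilCubic, vinzantSextic]
  ring

open Polynomial in
theorem dualPencilCubic_toPoly_of_bitangent_segment {s t v w : R} (u : R)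
    (hP : s ^ 2 + (v + 1) ^ 2 = 1) (hQ : (w - 1) ^ 2 + t ^ 2 = 1) (hvw : v - w = 2 * v * w) :
    let a := (1 - u) * w - u * v
    (dualPencilCubic (u * s) (u * v + (1 - u) * w) ((1 - u) * t)).toPoly =
      C 1 * (X - C a) * (X - C a) * (X - C (2 - 2 * a)) := by
  intro a
  rw [Cubic.C_mul_prod_X_sub_C_eq, dualPencilCubic]
  congr 2
  · ring
  · linear_combination 2 * u ^ 2 * hP + 2 * (1 - u) ^ 2 * hQ + 4 * u * (1 - u) * hvw
  · linear_combination 2 * (u * v + (1 - u) * w) * (u ^ 2 * hP - (1 - u) ^ 2 * hQ)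
      - 4 * a * u * (1 - u) * hvw

theorem vinzantSextic_eq_zero_of_bitangent_segment [NoZeroDivisors R] [NeZero (2 : R)]
    {s t v w : R} (u : R)
    (hP : s ^ 2 + (v + 1) ^ 2 = 1) (hQ : (w - 1) ^ 2 + t ^ 2 = 1) (hvw : v - w = 2 * v * w) :
    vinzantSextic (u * s) (u * v + (1 - u) * w) ((1 - u) * t) = 0 := by
  have hdiscr := cubic_discr_eq_zero_of_double_root
    (dualPencilCubic_toPoly_of_bitangent_segment u hP hQ hvw)
  have hfour : (-4 : R) ≠ 0 := by
    rw [show (-4 : R) = -(2 * 2) by norm_num]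
    exact neg_ne_zero.mpr (mul_ne_zero two_ne_zero two_ne_zero)
  rw [discr_dualPencilCubic] at hdiscr
  exact (mul_eq_zero.mp hdiscr).resolve_left hfour

end CommRing

theorem vinzant_parametrization_satisfies_sextic_general
    {K : Type*} [Field K] [NeZero (2 : K)] {u v p q x y z : K} (hv : 1 + 2 * v ≠ 0)
    (hp : p ^ 2 = -v * (2 + v)) (hq : q ^ 2 = v * (2 + 3 * v))
    (hx : x = u * p)
    (hy : y = v * (1 + 2 * u * v) / (1 + 2 * v))
    (hz : z = (-1 + u) * q / (1 + 2 * v)) :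
    vinzantSextic x y z = 0 := by
  obtain ⟨r, hr⟩ : ∃ r, (1 + 2 * v) * r = 1 := ⟨_, mul_inv_cancel₀ hv⟩
  rw [div_eq_mul_inv, ← eq_inv_of_mul_eq_one_right hr] at hy hz
  have hvw : v - v * r = 2 * v * (v * r) := by linear_combination -v * hr
  have hP : p ^ 2 + (v + 1) ^ 2 = 1 := by linear_combination hp
  have hQ : (v * r - 1) ^ 2 + (-q * r) ^ 2 = 1 := by
    linear_combination r ^ 2 * hq + 2 * v * r * hr
  have hy' : y = u * v + (1 - u) * (v * r) := by linear_combination hy + u * v * hr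
  have hz' : z = (1 - u) * (-q * r) := by linear_combination hz
  rw [hx, hy', hz']
  exact vinzantSextic_eq_zero_of_bitangent_segment u hP hQ hvw

/-- every point of Vinzant's parametrized surface for Example 3 satisfies
the displayed sextic equation. -/
theorem vinzant_parametrization_satisfies_sextic
    (u v : ℝ) (hu0 : 0 ≤ u) (hu1 : u ≤ 1) (hv0 : -2 ≤ v) (hv1 : v ≤ -2/3)
    (x y z : ℝ)
    (hx : x = u * Real.sqrt (-v * (2 + v)))
    (hy : y = v * (1 + 2 * u * v) / (1 + 2 * v))
    (hz : z = (-1 + u) * Real.sqrt (v * (2 + 3 * v)) / (1 + 2 * v)) :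
    0 = -4*x^4 + 8*x^6 - 16*x^2*y + 36*x^4*y - 16*y^2 + 40*x^2*y^2 + 15*x^4*y^2
      + 36*x^2*y^3 + 8*y^4 + 6*x^2*y^4 - y^6 - 8*x^2*z^2 + 24*x^4*z^2 + 16*y*z^2
      + 40*y^2*z^2 - 78*x^2*y^2*z^2 - 36*y^3*z^2 + 6*y^4*z^2 - 4*z^4 + 24*x^2*z^4
      - 36*y*z^4 + 15*y^2*z^4 + 8*z^6 := by
  have hp : √(-v * (2 + v)) ^ 2 = -v * (2 + v) := sq_sqrt (by nlinarith)
  have hq : √(v * (2 + 3 * v)) ^ 2 = v * (2 + 3 * v) := sq_sqrt (by nlinarith)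
  exact (vinzant_parametrization_satisfies_sextic_general (by linarith) hp hq hx hy hz).symm
end

section
/- One has ∫_{v=-2}^{-2/3} (−3v) / ( (1 + 2v + 3v²) · √(−(2+v)(2+3v)) ) dv = √2 · π / 2. -/
open Real

/-! If `f² < q` then `arcsin (f / √q)` has derivative `(2 f' q - f q') / (2 q √(q - f²))`. Taking
`f = 3 (1 + v)` and `q = 1 + 2 v + 3 v²` gives `q - f² = -2 (2 + v) (2 + 3 v)` and
`2 f' q - f q' = -12 v`, so this derivative is `√2` times the integrand. The integrand is
unbounded at the endpoints, where `f / √q` equals `-1` and `1`, but it is nonnegative and its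
primitive is continuous up to the endpoints, so the fundamental theorem of calculus still
applies. -/

open Set

theorem integral_eq_sub_of_hasDerivAt_of_nonneg {F F' : ℝ → ℝ} {a b : ℝ} (hab : a ≤ b)
    (hcont : ContinuousOn F (Icc a b)) (hderiv : ∀ x ∈ Ioo a b, HasDerivAt F (F' x) x)
    (hnonneg : ∀ x ∈ Ioo a b, 0 ≤ F' x) : ∫ x in a..b, F' x = F b - F a := by
  refine intervalIntegral.integral_eq_sub_of_hasDerivAt_of_le hab hcont hderiv ?_
  apply intervalIntegral.intervalIntegrable_deriv_of_nonneg (g := F) <;>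
    simpa only [uIcc_of_le hab, min_eq_left hab, max_eq_right hab]

section ArcsinDivSqrt

variable {f q : ℝ → ℝ}

theorem sqrt_one_sub_div_sqrt_sq {y r : ℝ} (hr : 0 < r) :
    √(1 - (y / √r) ^ 2) = √(r - y ^ 2) / √r := by
  rw [← sqrt_div' _ hr.le, div_pow, sq_sqrt hr.le, sub_div, div_self hr.ne']

theorem abs_div_sqrt_lt_one {y r : ℝ} (h : y ^ 2 < r) : |y / √r| < 1 := by
  have hr : 0 < r := (sq_nonneg y).trans_lt h
  rw [← sq_lt_one_iff_abs_lt_one, div_pow, sq_sqrt hr.le]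
  exact (div_lt_one hr).2 h

theorem hasDerivAt_arcsin_div_sqrt {f' q' x : ℝ} (hf : HasDerivAt f f' x)
    (hq : HasDerivAt q q' x) (h : f x ^ 2 < q x) :
    HasDerivAt (fun y ↦ arcsin (f y / √(q y)))
      ((2 * f' * q x - f x * q') / (2 * q x * √(q x - f x ^ 2))) x := by
  have hqx : 0 < q x := (sq_nonneg (f x)).trans_lt h
  have hquot := hf.fun_div (hq.sqrt hqx.ne') (sqrt_pos.2 hqx).ne'
  obtain ⟨hlower, hupper⟩ := abs_lt.1 (abs_div_sqrt_lt_one h)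
  refine ((hasDerivAt_arcsin hlower.ne' hupper.ne).comp x hquot).congr_deriv ?_
  have hroot : 0 < √(q x - f x ^ 2) := sqrt_pos.2 (sub_pos.2 h)
  rw [sqrt_one_sub_div_sqrt_sq hqx]
  field_simp
  rw [sq_sqrt hqx.le]

theorem continuousOn_arcsin_div_sqrt {s : Set ℝ} (hf : ContinuousOn f s)
    (hq : ContinuousOn q s) (hpos : ∀ x ∈ s, 0 < q x) :
    ContinuousOn (fun x ↦ arcsin (f x / √(q x))) s :=
  (hf.div hq.sqrt fun x hx ↦ (sqrt_pos.2 (hpos x hx)).ne').arcsin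

theorem integral_arcsin_div_sqrt_deriv {f' q' : ℝ → ℝ} {a b : ℝ} (hab : a ≤ b)
    (hfc : ContinuousOn f (Icc a b)) (hqc : ContinuousOn q (Icc a b))
    (hpos : ∀ x ∈ Icc a b, 0 < q x)
    (hf : ∀ x ∈ Ioo a b, HasDerivAt f (f' x) x) (hq : ∀ x ∈ Ioo a b, HasDerivAt q (q' x) x)
    (hlt : ∀ x ∈ Ioo a b, f x ^ 2 < q x)
    (hnonneg : ∀ x ∈ Ioo a b, 0 ≤ 2 * f' x * q x - f x * q' x) :
    ∫ x in a..b, (2 * f' x * q x - f x * q' x) / (2 * q x * √(q x - f x ^ 2)) =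
      arcsin (f b / √(q b)) - arcsin (f a / √(q a)) := by
  refine integral_eq_sub_of_hasDerivAt_of_nonneg hab (continuousOn_arcsin_div_sqrt hfc hqc hpos)
    (fun x hx ↦ hasDerivAt_arcsin_div_sqrt (hf x hx) (hq x hx) (hlt x hx)) fun x hx ↦ ?_
  have := hpos x (Ioo_subset_Icc_self hx)
  exact div_nonneg (hnonneg x hx) (by positivity)

theorem integral_arcsin_div_sqrt_deriv_eq_pi {f' q' : ℝ → ℝ} {a b : ℝ} (hab : a ≤ b)
    (hfc : ContinuousOn f (Icc a b)) (hqc : ContinuousOn q (Icc a b))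
    (hpos : ∀ x ∈ Icc a b, 0 < q x)
    (hf : ∀ x ∈ Ioo a b, HasDerivAt f (f' x) x) (hq : ∀ x ∈ Ioo a b, HasDerivAt q (q' x) x)
    (hlt : ∀ x ∈ Ioo a b, f x ^ 2 < q x)
    (hnonneg : ∀ x ∈ Ioo a b, 0 ≤ 2 * f' x * q x - f x * q' x)
    (hfa : f a = -√(q a)) (hfb : f b = √(q b)) :
    ∫ x in a..b, (2 * f' x * q x - f x * q' x) / (2 * q x * √(q x - f x ^ 2)) = π := by
  have hqa : √(q a) ≠ 0 := (sqrt_pos.2 (hpos a (left_mem_Icc.2 hab))).ne'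
  have hqb : √(q b) ≠ 0 := (sqrt_pos.2 (hpos b (right_mem_Icc.2 hab))).ne'
  rw [integral_arcsin_div_sqrt_deriv hab hfc hqc hpos hf hq hlt hnonneg, hfa, hfb,
    neg_div, div_self hqa, div_self hqb, arcsin_neg, arcsin_one]
  ring

end ArcsinDivSqrt

theorem hasDerivAt_quadratic (a b c x : ℝ) :
    HasDerivAt (fun y ↦ a + b * y + c * y ^ 2) (b + 2 * c * x) x := by
  refine ((((hasDerivAt_id' x).const_mul b).const_add a).add
    ((hasDerivAt_pow 2 x).const_mul c)).congr_deriv ?_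
  norm_num
  ring

theorem quadratic_sub_linear_sq (v : ℝ) :
    1 + 2 * v + 3 * v ^ 2 - (3 * (1 + v)) ^ 2 = 2 * -((2 + v) * (2 + 3 * v)) := by
  ring

theorem two_mul_quadratic_sub_linear_mul (v : ℝ) :
    2 * 3 * (1 + 2 * v + 3 * v ^ 2) - 3 * (1 + v) * (2 + 2 * 3 * v) = 4 * (-3 * v) := by
  ring

theorem linear_sq_lt_quadratic {v : ℝ} (hv : v ∈ Ioo (-2) (-2 / 3)) :
    (3 * (1 + v)) ^ 2 < 1 + 2 * v + 3 * v ^ 2 := by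
  have hleft : 0 < 2 + v := by linarith [hv.1]
  have hright : 2 + 3 * v < 0 := by linarith [hv.2]
  rw [← sub_pos, quadratic_sub_linear_sq]
  linarith [mul_neg_of_pos_of_neg hleft hright]

theorem integrand_eq_sqrt_two_div_two_mul (v : ℝ) :
    (-3 * v) / ((1 + 2 * v + 3 * v ^ 2) * √(-((2 + v) * (2 + 3 * v)))) =
      √2 / 2 * ((2 * 3 * (1 + 2 * v + 3 * v ^ 2) - 3 * (1 + v) * (2 + 2 * 3 * v)) /
        (2 * (1 + 2 * v + 3 * v ^ 2) *
          √(1 + 2 * v + 3 * v ^ 2 - (3 * (1 + v)) ^ 2))) := by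
  rw [quadratic_sub_linear_sq, two_mul_quadratic_sub_linear_mul, sqrt_mul zero_le_two]
  field_simp
  ring

theorem integral_arcsin_linear_div_sqrt_quadratic_deriv :
    ∫ v in (-2 : ℝ)..(-2 / 3),
      (2 * 3 * (1 + 2 * v + 3 * v ^ 2) - 3 * (1 + v) * (2 + 2 * 3 * v)) /
        (2 * (1 + 2 * v + 3 * v ^ 2) *
          √(1 + 2 * v + 3 * v ^ 2 - (3 * (1 + v)) ^ 2)) = π := by
  have hfderiv (v : ℝ) : HasDerivAt (fun v : ℝ ↦ 3 * (1 + v)) 3 v := by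
    simpa using ((hasDerivAt_id v).const_add 1).const_mul 3
  have hsqrt_nine : √(9 : ℝ) = 3 := by
    rw [show (9 : ℝ) = 3 ^ 2 by norm_num, sqrt_sq zero_le_three]
  have hpos (v : ℝ) : 0 < 1 + 2 * v + 3 * v ^ 2 := by nlinarith [sq_nonneg (3 * v + 1)]
  have hnonneg : ∀ v ∈ Ioo (-2 : ℝ) (-2 / 3),
      0 ≤ 2 * 3 * (1 + 2 * v + 3 * v ^ 2) - 3 * (1 + v) * (2 + 2 * 3 * v) := fun v hv ↦ by
    rw [two_mul_quadratic_sub_linear_mul]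
    linarith [hv.2]
  exact integral_arcsin_div_sqrt_deriv_eq_pi
    (f := fun v ↦ 3 * (1 + v)) (q := fun v ↦ 1 + 2 * v + 3 * v ^ 2)
    (by norm_num) (by fun_prop) (by fun_prop) (fun v _ ↦ hpos v)
    (fun v _ ↦ hfderiv v) (fun v _ ↦ hasDerivAt_quadratic 1 2 3 v)
    (fun _ ↦ linear_sq_lt_quadratic) hnonneg (by norm_num [hsqrt_nine]) (by norm_num)

/-- ∫_{v=-2}^{-2/3} (−3v)/((1 + 2v + 3v²)√(−(2+v)(2+3v))) dv = √2 π/2. -/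
theorem mean_curvature_integral_example_three :
    (∫ v in (-2 : ℝ)..(-2/3),
        (-3 * v) / ((1 + 2 * v + 3 * v ^ 2) * Real.sqrt (-((2 + v) * (2 + 3 * v))))) =
      Real.sqrt 2 * Real.pi / 2 := by
  simp_rw [integrand_eq_sqrt_two_div_two_mul]
  rw [intervalIntegral.integral_const_mul,
    integral_arcsin_linear_div_sqrt_quadratic_deriv]
  ring
end
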